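/- (Ershov–He) Let n ≥ 4 and let Γ be a finite index subgroup of Aut(F_n) that contains [IA_n, IA_n], the commutator subgroup of the group of IA-automorphisms. Then Γ has finite abelianization: the quotient Γ/[Γ,Γ] is a finite group. In particular, every group homomorphism Γ → (ℝ,+) is trivial. -/

import Mathlib

noncomputable section

/-- The free group of rank `n`. -/
abbrev FreeGrp (n : ℕ) : Type := FreeGroup (Fin n)

/-- The automorphism group `Aut(Fₙ)`. -/
abbrev AutF (n : ℕ) : Type := MulAut (FreeGrp n)

/-- The subgroup `IAₙ ≤ Aut(Fₙ)` of automorphisms acting trivially on the abelianization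
`Fₙ^{ab} ≅ ℤⁿ`, i.e. the kernel of the natural map `Aut(Fₙ) → Aut(ℤⁿ)`. -/
def IA (n : ℕ) : Subgroup (AutF n) where
  carrier := {e | ∀ x : FreeGrp n, Abelianization.of (e x) = Abelianization.of x}
  one_mem' := fun _ => rfl
  mul_mem' := by
    intro a b ha hb x
    have h : (a * b) x = a (b x) := rfl
    rw [h, ha (b x), hb x]
  inv_mem' := by
    intro a ha x
    have h := ha (a⁻¹ x)
    have h' : a (a⁻¹ x) = x := a.apply_symm_apply x
    rw [h'] at h
    exact h.symm

/-!
Let `N` be the index of the normal core `G₀` of `Γ`. Since `N`-th powers of automorphisms lie in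
`G₀`, any two `N`-th powers in `E = Aut(Fₙ) ⧸ ⁅G₀, G₀⁆` commute, and it suffices to prove that `E`
is finite. Let `J` be the image in `E` of the subgroup generated by Magnus' generators.

In `E ⧸ J` the transvections satisfy the Steinberg relations. Writing a transvection as a
commutator of two others, which commute with it, one sees that its order divides `N ^ 2`. So the
transvections generate a quotient of the Steinberg group of `ℤ/N²`, which is finite, and `E ⧸ J` is
finite because `Aut(Fₙ)` is generated by transvections and signed permutations (Nielsen).

The same computation shows that the abelianization of `J` is finite, while `⁅J, J⁆` is abelian since
it lies in the image of `G₀`. If `J` were infinite, there would be a nonzero `φ : ⁅J, J⁆ → ℂ` which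
conjugation by `J` multiplies by a character `χ`, and `a ↦ φ ⁅a, b⁆` would be a cocycle twisted by
`χ`, that is, an action of `J` on the affine line. When some linear part is nontrivial such an
action has a fixed point: for `n ≥ 4` enough of Magnus' generators commute for the unique fixed
point of a non-translation to be shared by all of them. So the cocycle is a coboundary, and this
forces `φ = 0`.
-/

namespace FreeGroupAut

open FreeGroup (of mk invRev IsReduced toWord_inv mk_toWord isReduced_toWord norm_inv_eq)
open scoped commutatorElement

section Generators

variable {α : Type*}

theorem ext_of {a b : MulAut (FreeGroup α)} (h : ∀ k, a (of k) = b (of k)) : a = b :=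
  MulEquiv.toMonoidHom_injective (FreeGroup.ext_hom _ _ h)

/-- The automorphism permuting the generators by `s`. -/
def permutation (s : Equiv.Perm α) : MulAut (FreeGroup α) := FreeGroup.freeGroupCongr s

@[simp]
theorem permutation_apply (s : Equiv.Perm α) (k : α) : permutation s (of k) = of (s k) := by
  simp [permutation]

variable [DecidableEq α]

/-- The endomorphism `x_i ↦ x_i x_j^e` of the free group, the other generators being fixed. -/
def transvectionHom (i j : α) (e : ℤ) : FreeGroup α →* FreeGroup α :=
  FreeGroup.lift fun k => if k = i then of i * of j ^ e else of k

theorem transvectionHom_comp_neg {i j : α} (h : i ≠ j) (e : ℤ) :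
    (transvectionHom i j e).comp (transvectionHom i j (-e)) = MonoidHom.id _ := by
  ext k
  rcases eq_or_ne k i with rfl | hk <;> simp [transvectionHom, h.symm, *]

/-- The right transvection `x_i ↦ x_i x_j`; it is the identity in the junk case `i = j`. -/
def transvection (i j : α) : MulAut (FreeGroup α) :=
  if h : i = j then 1 else
    MonoidHom.toMulEquiv (transvectionHom i j 1) (transvectionHom i j (-1))
      (by simpa using transvectionHom_comp_neg h (-1)) (transvectionHom_comp_neg h 1)

@[simp]
theorem transvection_apply {i j : α} (h : i ≠ j) (k : α) :
    transvection i j (of k) = if k = i then of i * of j else of k := by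
  simp [transvection, h, transvectionHom]

@[simp]
theorem transvection_symm_apply {i j : α} (h : i ≠ j) (k : α) :
    MulEquiv.symm (transvection i j) (of k) = if k = i then of i * (of j)⁻¹ else of k := by
  rw [MulEquiv.symm_apply_eq]
  rcases eq_or_ne k i with rfl | hk <;> simp [h.symm, *]

/-- The automorphism `x_i ↦ x_i⁻¹`. -/
def inversion (i : α) : MulAut (FreeGroup α) :=
  let f : FreeGroup α →* FreeGroup α := FreeGroup.lift fun k => if k = i then (of i)⁻¹ else of k
  have hf : f.comp f = MonoidHom.id _ := by
    ext k
    rcases eq_or_ne k i with rfl | hk <;> simp [f, *]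
  MonoidHom.toMulEquiv f f hf hf

@[simp]
theorem inversion_apply (i k : α) : inversion i (of k) = if k = i then (of i)⁻¹ else of k := by
  simp [inversion]

/-- The left transvection `x_i ↦ x_j x_i`. -/
def leftTransvection (i j : α) : MulAut (FreeGroup α) :=
  inversion i * (transvection i j)⁻¹ * inversion i

@[simp]
theorem leftTransvection_apply {i j : α} (h : i ≠ j) (k : α) :
    leftTransvection i j (of k) = if k = i then of j * of i else of k := by
  rcases eq_or_ne k i with rfl | hk <;> simp [leftTransvection, h.symm, *]

@[simp]
theorem leftTransvection_symm_apply {i j : α} (h : i ≠ j) (k : α) :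
    MulEquiv.symm (leftTransvection i j) (of k) = if k = i then (of j)⁻¹ * of i else of k := by
  rw [MulEquiv.symm_apply_eq]
  rcases eq_or_ne k i with rfl | hk <;> simp [h.symm, *]

/-- The partial conjugation `x_i ↦ x_j⁻¹ x_i x_j`. -/
def partialConj (i j : α) : MulAut (FreeGroup α) := (leftTransvection i j)⁻¹ * transvection i j

@[simp]
theorem partialConj_apply {i j : α} (h : i ≠ j) (k : α) :
    partialConj i j (of k) = if k = i then (of j)⁻¹ * of i * of j else of k := by
  rcases eq_or_ne k i with rfl | hk <;> simp [partialConj, h.symm, *]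

@[simp]
theorem partialConj_symm_apply {i j : α} (h : i ≠ j) (k : α) :
    MulEquiv.symm (partialConj i j) (of k) = if k = i then of j * of i * (of j)⁻¹ else of k := by
  rw [MulEquiv.symm_apply_eq]
  rcases eq_or_ne k i with rfl | hk <;> simp [mul_assoc, h.symm, *]

/-- The commutator transvection `x_i ↦ x_i [x_j, x_k]`. -/
def commTransvection (i j k : α) : MulAut (FreeGroup α) := ⁅transvection i j, transvection i k⁆

@[simp]
theorem commTransvection_apply {i j k : α} (hij : i ≠ j) (hik : i ≠ k) (l : α) :
    commTransvection i j k (of l) = if l = i then of i * ⁅of j, of k⁆ else of l := by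
  rcases eq_or_ne l i with rfl | hl <;>
    simp [commTransvection, commutatorElement_def, mul_assoc, hij.symm, hik.symm, *]

theorem commTransvection_inv (i j k : α) : (commTransvection i j k)⁻¹ = commTransvection i k j :=
  commutatorElement_inv _ _

end Generators

section Relations

variable {α : Type*} [DecidableEq α] {a b i j k : α}

theorem transvection_inv_eq (hab : a ≠ b) :
    (transvection a b)⁻¹ = inversion b * transvection a b * inversion b := by
  refine ext_of fun l => ?_
  rcases eq_or_ne l a with rfl | hla <;> rcases eq_or_ne l b with rfl | hlb <;>
    first | contradiction | simp [hab.symm, *]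

-- The final letters of the following names are the indices of the conjugated automorphism, those
-- of the conjugating `transvection` or `inversion` being `a` and `b`.
theorem transvection_partialConj_ij (hab : a ≠ b) (hia : i ≠ a) (hib : i ≠ b) (hja : j ≠ a)
    (hij : i ≠ j) : Commute (transvection a b) (partialConj i j) := by
  refine ext_of fun l => ?_
  rcases eq_or_ne l a with rfl | hla <;> rcases eq_or_ne l i with rfl | hli <;>
    first | contradiction | simp [mul_assoc, hia.symm, hib.symm, *]

theorem transvection_partialConj_ab (hab : a ≠ b) :
    Commute (transvection a b) (partialConj a b) := by
  refine ext_of fun l => ?_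
  rcases eq_or_ne l a with rfl | hla <;> simp [mul_assoc, hab.symm, *]

theorem transvection_partialConj_ia (hab : a ≠ b) (hia : i ≠ a) (hib : i ≠ b) :
    SemiconjBy (transvection a b) (partialConj i a) (partialConj i a * partialConj i b) := by
  refine ext_of fun l => ?_
  rcases eq_or_ne l a with rfl | hla <;> rcases eq_or_ne l i with rfl | hli <;>
    first | contradiction | simp [mul_assoc, hia.symm, hib.symm, *]

theorem transvection_partialConj_aj (hab : a ≠ b) (hja : j ≠ a) :
    SemiconjBy (transvection a b) (partialConj a j) (commTransvection a b j * partialConj a j) := by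
  refine ext_of fun l => ?_
  rcases eq_or_ne l a with rfl | hla <;>
    simp [commutatorElement_def, mul_assoc, hab.symm, hja.symm, *]

theorem transvection_partialConj_ba (hab : a ≠ b) :
    SemiconjBy (transvection a b) (partialConj b a) (partialConj a b * partialConj b a) := by
  refine ext_of fun l => ?_
  rcases eq_or_ne l a with rfl | hla <;> rcases eq_or_ne l b with rfl | hlb <;>
    first | contradiction | simp [mul_assoc, hab.symm, *]

theorem transvection_partialConj_bj (hab : a ≠ b) (hja : j ≠ a) (hjb : j ≠ b) :
    SemiconjBy (transvection a b) (partialConj b j)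
      ((partialConj a j)⁻¹ * commTransvection a j b * partialConj a j * partialConj b j) := by
  refine ext_of fun l => ?_
  rcases eq_or_ne l a with rfl | hla <;> rcases eq_or_ne l b with rfl | hlb <;>
    first | contradiction | simp [commutatorElement_def, mul_assoc, hab.symm, hja.symm, hjb.symm, *]

theorem transvection_commTransvection_ijk (hab : a ≠ b) (hia : i ≠ a) (hib : i ≠ b) (hja : j ≠ a)
    (hka : k ≠ a) (hij : i ≠ j) (hik : i ≠ k) :
    Commute (transvection a b) (commTransvection i j k) := by
  refine ext_of fun l => ?_
  rcases eq_or_ne l a with rfl | hla <;> rcases eq_or_ne l i with rfl | hli <;>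
    first | contradiction | simp [hia.symm, hib.symm, *]

theorem transvection_commTransvection_iak (hab : a ≠ b) (hia : i ≠ a) (hib : i ≠ b) (hka : k ≠ a)
    (hik : i ≠ k) :
    SemiconjBy (transvection a b) (commTransvection i a k)
      (partialConj i a * commTransvection i b k * (partialConj i a)⁻¹ *
        commTransvection i a k) := by
  refine ext_of fun l => ?_
  rcases eq_or_ne l a with rfl | hla <;> rcases eq_or_ne l i with rfl | hli <;>
    first | contradiction | simp [commutatorElement_def, mul_assoc, hia.symm, hib.symm, hik.symm, *]

theorem transvection_commTransvection_ajk (hab : a ≠ b) (hja : j ≠ a) (hka : k ≠ a) :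
    SemiconjBy (transvection a b) (commTransvection a j k)
      (partialConj a b * commTransvection a j k * (partialConj a b)⁻¹) := by
  refine ext_of fun l => ?_
  rcases eq_or_ne l a with rfl | hla <;>
    simp [commutatorElement_def, mul_assoc, hab.symm, hja.symm, hka.symm, *]

theorem transvection_commTransvection_bjk (hab : a ≠ b) (hja : j ≠ a) (hka : k ≠ a) (hjb : j ≠ b)
    (hkb : k ≠ b) :
    SemiconjBy (transvection a b) (commTransvection b j k)
      (partialConj a b * commTransvection a k j * (partialConj a b)⁻¹ *
        commTransvection b j k) := by
  refine ext_of fun l => ?_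
  rcases eq_or_ne l a with rfl | hla <;> rcases eq_or_ne l b with rfl | hlb <;>
    first | contradiction |
      simp [commutatorElement_def, mul_assoc, hab.symm, hja.symm, hka.symm, hjb.symm, hkb.symm, *]

theorem transvection_commTransvection_bka (hab : a ≠ b) (hka : k ≠ a) (hkb : k ≠ b) :
    SemiconjBy (transvection a b) (commTransvection b k a)
      (partialConj a b * partialConj a k * commTransvection b k a * partialConj b a *
        (partialConj b k)⁻¹ * (partialConj a k)⁻¹ * commTransvection a b k * partialConj a k *
        (partialConj b a)⁻¹ * (partialConj a b)⁻¹) := by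
  refine ext_of fun l => ?_
  rcases eq_or_ne l a with rfl | hla <;> rcases eq_or_ne l b with rfl | hlb <;>
    first | contradiction | simp [commutatorElement_def, mul_assoc, hab.symm, hka.symm, hkb.symm, *]

theorem inversion_partialConj_ij (hja : j ≠ a) (hij : i ≠ j) :
    Commute (inversion a) (partialConj i j) := by
  refine ext_of fun l => ?_
  rcases eq_or_ne l a with rfl | hla <;> rcases eq_or_ne l i with rfl | hli <;>
    first | contradiction | simp [mul_assoc, *]

theorem inversion_partialConj_ia (hia : i ≠ a) :
    SemiconjBy (inversion a) (partialConj i a) (partialConj i a)⁻¹ := by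
  refine ext_of fun l => ?_
  rcases eq_or_ne l a with rfl | hla <;> rcases eq_or_ne l i with rfl | hli <;>
    first | contradiction | simp [mul_assoc, hia.symm, *]

theorem inversion_commTransvection_ijk (hia : i ≠ a) (hja : j ≠ a) (hka : k ≠ a) (hij : i ≠ j)
    (hik : i ≠ k) : Commute (inversion a) (commTransvection i j k) := by
  refine ext_of fun l => ?_
  rcases eq_or_ne l a with rfl | hla <;> rcases eq_or_ne l i with rfl | hli <;>
    first | contradiction | simp [commutatorElement_def, hia.symm, *]

theorem inversion_commTransvection_iak (hia : i ≠ a) (hka : k ≠ a) (hik : i ≠ k) :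
    SemiconjBy (inversion a) (commTransvection i a k)
      ((partialConj i a)⁻¹ * commTransvection i k a * partialConj i a) := by
  refine ext_of fun l => ?_
  rcases eq_or_ne l a with rfl | hla <;> rcases eq_or_ne l i with rfl | hli <;>
    first | contradiction | simp [commutatorElement_def, mul_assoc, hia.symm, hik.symm, *]

theorem inversion_commTransvection_ajk (hja : j ≠ a) (hka : k ≠ a) :
    SemiconjBy (inversion a) (commTransvection a j k)
      (partialConj a j * partialConj a k * (partialConj a j)⁻¹ * (partialConj a k)⁻¹ *
        commTransvection a k j) := by
  refine ext_of fun l => ?_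
  rcases eq_or_ne l a with rfl | hla <;>
    simp [commutatorElement_def, mul_assoc, hja.symm, hka.symm, *]

theorem commute_partialConj {k l : α} (hij : i ≠ j) (hkl : k ≠ l) (hik : i ≠ k) (hil : i ≠ l)
    (hkj : k ≠ j) : Commute (partialConj i j) (partialConj k l) := by
  refine ext_of fun m => ?_
  rcases eq_or_ne m i with rfl | hmi <;> rcases eq_or_ne m k with rfl | hmk <;>
    first | contradiction | simp [mul_assoc, hil.symm, hkj.symm, *]

theorem commute_partialConj_commTransvection {k l m : α} (hij : i ≠ j) (hkl : k ≠ l) (hkm : k ≠ m)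
    (hik : i ≠ k) (hil : i ≠ l) (him : i ≠ m) (hkj : k ≠ j) :
    Commute (partialConj i j) (commTransvection k l m) := by
  refine ext_of fun p => ?_
  rcases eq_or_ne p i with rfl | hpi <;> rcases eq_or_ne p k with rfl | hpk <;>
    first | contradiction |
      simp [commutatorElement_def, mul_assoc, hil.symm, him.symm, hkj.symm, *]

theorem commute_partialConj_mul_partialConj (hij : i ≠ j) (hik : i ≠ k) (hjk : j ≠ k) :
    Commute (partialConj i j) (partialConj i k * partialConj j k) := by
  refine ext_of fun m => ?_
  rcases eq_or_ne m i with rfl | hmi <;> rcases eq_or_ne m j with rfl | hmj <;>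
    first | contradiction | simp [mul_assoc, hij.symm, hik.symm, *]

theorem permutation_transvection (s : Equiv.Perm α) (hij : i ≠ j) :
    SemiconjBy (permutation s) (transvection i j) (transvection (s i) (s j)) :=
  ext_of fun l => by rcases eq_or_ne l i with rfl | hli <;> simp [*]

theorem permutation_partialConj (s : Equiv.Perm α) (hij : i ≠ j) :
    SemiconjBy (permutation s) (partialConj i j) (partialConj (s i) (s j)) :=
  ext_of fun l => by rcases eq_or_ne l i with rfl | hli <;> simp [*]

theorem permutation_commTransvection (s : Equiv.Perm α) (hij : i ≠ j) (hik : i ≠ k) :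
    SemiconjBy (permutation s) (commTransvection i j k) (commTransvection (s i) (s j) (s k)) :=
  ext_of fun l => by rcases eq_or_ne l i with rfl | hli <;> simp [commutatorElement_def, *]

end Relations

section MagnusSubgroup

variable {α : Type*} [DecidableEq α] {a b i j k : α}

/-- Nielsen's generators of the automorphism group of a free group. -/
inductive IsNielsenGenerator : MulAut (FreeGroup α) → Prop
  | permutation (s : Equiv.Perm α) : IsNielsenGenerator (permutation s)
  | inversion (i : α) : IsNielsenGenerator (inversion i)
  | transvection {i j : α} (hij : i ≠ j) : IsNielsenGenerator (transvection i j)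

/-- Magnus' generators of the group of IA-automorphisms of a free group. -/
inductive IsMagnusGenerator : MulAut (FreeGroup α) → Prop
  | partialConj {i j : α} (hij : i ≠ j) : IsMagnusGenerator (partialConj i j)
  | commTransvection {i j k : α} (hij : i ≠ j) (hik : i ≠ k) (hjk : j ≠ k) :
    IsMagnusGenerator (commTransvection i j k)

variable (α) in
/-- The subgroup generated by Nielsen's generators; see `nielsenSubgroup_eq_top`. -/
def nielsenSubgroup : Subgroup (MulAut (FreeGroup α)) := Subgroup.closure {g | IsNielsenGenerator g}

variable (α) in
/-- The subgroup generated by Magnus' generators. By a theorem of Magnus it consists of all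
IA-automorphisms. -/
def magnusSubgroup : Subgroup (MulAut (FreeGroup α)) := Subgroup.closure {u | IsMagnusGenerator u}

theorem transvection_mem_nielsenSubgroup (i j : α) : transvection i j ∈ nielsenSubgroup α := by
  rcases eq_or_ne i j with rfl | hij
  · simp [transvection]
  · exact Subgroup.subset_closure (.transvection hij)

theorem inversion_mem_nielsenSubgroup (i : α) : inversion i ∈ nielsenSubgroup α :=
  Subgroup.subset_closure (.inversion i)

theorem permutation_mem_nielsenSubgroup (s : Equiv.Perm α) : permutation s ∈ nielsenSubgroup α :=
  Subgroup.subset_closure (.permutation s)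

@[simp]
theorem partialConj_mem (i j : α) : partialConj i j ∈ magnusSubgroup α := by
  rcases eq_or_ne i j with rfl | hij
  · have hι : inversion i * inversion i = 1 := inv_mul_cancel (inversion i)
    simp [partialConj, leftTransvection, transvection, hι]
  · exact Subgroup.subset_closure (.partialConj hij)

@[simp]
theorem commTransvection_mem (i j k : α) : commTransvection i j k ∈ magnusSubgroup α := by
  by_cases hij : i = j
  · simp [commTransvection, transvection, hij]
  by_cases hik : i = k
  · simp [commTransvection, transvection, hik]
  by_cases hjk : j = k
  · simp [commTransvection, hjk]
  exact Subgroup.subset_closure (.commTransvection hij hik hjk)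

theorem conj_mem_of_semiconjBy {G : Type*} [Group G] {H : Subgroup G} {g u v : G}
    (h : SemiconjBy g u v) (hv : v ∈ H) : g * u * g⁻¹ ∈ H := by
  rwa [h.eq, mul_inv_cancel_right]

theorem conj_commTransvection_swap {g : MulAut (FreeGroup α)}
    (h : g * commTransvection i j k * g⁻¹ ∈ magnusSubgroup α) :
    g * commTransvection i k j * g⁻¹ ∈ magnusSubgroup α := by
  simpa [← commTransvection_inv i j k, mul_assoc] using inv_mem h

theorem transvection_conj_partialConj_mem (hab : a ≠ b) (hij : i ≠ j) :
    transvection a b * partialConj i j * (transvection a b)⁻¹ ∈ magnusSubgroup α := by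
  have mem {v} := @conj_mem_of_semiconjBy _ _ (magnusSubgroup α) (transvection a b)
    (partialConj i j) v
  rcases eq_or_ne i a with rfl | hia
  · exact mem (transvection_partialConj_aj hab hij.symm)
      (mul_mem (commTransvection_mem _ _ _) (partialConj_mem _ _))
  rcases eq_or_ne i b with rfl | hib
  · rcases eq_or_ne j a with rfl | hja
    · exact mem (transvection_partialConj_ba hab)
        (mul_mem (partialConj_mem _ _) (partialConj_mem _ _))
    · refine mem (transvection_partialConj_bj hab hja hij.symm) ?_
      simp (maxDischargeDepth := 10) [mul_mem]
  rcases eq_or_ne j a with rfl | hja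
  · exact mem (transvection_partialConj_ia hab hia hib)
      (mul_mem (partialConj_mem _ _) (partialConj_mem _ _))
  · exact mem (transvection_partialConj_ij hab hia hib hja hij) (partialConj_mem _ _)

theorem transvection_conj_commTransvection_mem (hab : a ≠ b) (hij : i ≠ j) (hik : i ≠ k)
    (hjk : j ≠ k) :
    transvection a b * commTransvection i j k * (transvection a b)⁻¹ ∈ magnusSubgroup α := by
  rcases eq_or_ne i a with rfl | hia
  · refine conj_mem_of_semiconjBy (transvection_commTransvection_ajk hab hij.symm hik.symm) ?_
    simp (maxDischargeDepth := 10) [mul_mem]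
  rcases eq_or_ne i b with rfl | hib
  · have mem_ka {k : α} (hka : k ≠ a) (hik : i ≠ k) :
        transvection a i * commTransvection i k a * (transvection a i)⁻¹ ∈ magnusSubgroup α := by
      refine conj_mem_of_semiconjBy (transvection_commTransvection_bka hab hka hik.symm) ?_
      simp (maxDischargeDepth := 10) [mul_mem]
    rcases eq_or_ne k a with rfl | hka
    · exact mem_ka hjk hij
    rcases eq_or_ne j a with rfl | hja
    · exact conj_commTransvection_swap (mem_ka hka hik)
    refine conj_mem_of_semiconjBy
      (transvection_commTransvection_bjk hab hja hka hij.symm hik.symm) ?_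
    simp (maxDischargeDepth := 10) [mul_mem]
  have mem_ak {k : α} (hka : k ≠ a) (hik : i ≠ k) :
      transvection a b * commTransvection i a k * (transvection a b)⁻¹ ∈ magnusSubgroup α := by
    refine conj_mem_of_semiconjBy (transvection_commTransvection_iak hab hia hib hka hik) ?_
    simp (maxDischargeDepth := 10) [mul_mem]
  rcases eq_or_ne j a with rfl | hja
  · exact mem_ak hjk.symm hik
  rcases eq_or_ne k a with rfl | hka
  · exact conj_commTransvection_swap (mem_ak hjk hij)
  exact conj_mem_of_semiconjBy (transvection_commTransvection_ijk hab hia hib hja hka hij hik)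
    (commTransvection_mem _ _ _)

theorem inversion_conj_partialConj_mem (a : α) (hij : i ≠ j) :
    inversion a * partialConj i j * (inversion a)⁻¹ ∈ magnusSubgroup α := by
  rcases eq_or_ne j a with rfl | hja
  · exact conj_mem_of_semiconjBy (inversion_partialConj_ia hij) (inv_mem (partialConj_mem _ _))
  · exact conj_mem_of_semiconjBy (inversion_partialConj_ij hja hij) (partialConj_mem _ _)

theorem inversion_conj_commTransvection_mem (a : α) (hij : i ≠ j) (hik : i ≠ k) (hjk : j ≠ k) :
    inversion a * commTransvection i j k * (inversion a)⁻¹ ∈ magnusSubgroup α := by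
  rcases eq_or_ne i a with rfl | hia
  · refine conj_mem_of_semiconjBy (inversion_commTransvection_ajk hij.symm hik.symm) ?_
    simp (maxDischargeDepth := 10) [mul_mem]
  have mem_ak {k : α} (hka : k ≠ a) (hik : i ≠ k) :
      inversion a * commTransvection i a k * (inversion a)⁻¹ ∈ magnusSubgroup α := by
    refine conj_mem_of_semiconjBy (inversion_commTransvection_iak hia hka hik) ?_
    simp (maxDischargeDepth := 10) [mul_mem]
  rcases eq_or_ne j a with rfl | hja
  · exact mem_ak hjk.symm hik
  rcases eq_or_ne k a with rfl | hka
  · exact conj_commTransvection_swap (mem_ak hjk hij)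
  exact conj_mem_of_semiconjBy (inversion_commTransvection_ijk hia hja hka hij hik)
    (commTransvection_mem _ _ _)

theorem IsNielsenGenerator.conj_mem_of_isMagnusGenerator {g u : MulAut (FreeGroup α)}
    (hg : IsNielsenGenerator g) (hu : IsMagnusGenerator u) : g * u * g⁻¹ ∈ magnusSubgroup α := by
  cases hu with
  | partialConj hij =>
    cases hg with
    | permutation s =>
      exact conj_mem_of_semiconjBy (permutation_partialConj s hij) (partialConj_mem _ _)
    | inversion a => exact inversion_conj_partialConj_mem a hij
    | transvection hab => exact transvection_conj_partialConj_mem hab hij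
  | commTransvection hij hik hjk =>
    cases hg with
    | permutation s =>
      exact conj_mem_of_semiconjBy (permutation_commTransvection s hij hik)
        (commTransvection_mem _ _ _)
    | inversion a => exact inversion_conj_commTransvection_mem a hij hik hjk
    | transvection hab => exact transvection_conj_commTransvection_mem hab hij hik hjk

theorem IsNielsenGenerator.conj_mem {g u : MulAut (FreeGroup α)} (hg : IsNielsenGenerator g)
    (hu : u ∈ magnusSubgroup α) : g * u * g⁻¹ ∈ magnusSubgroup α := by
  have hle : magnusSubgroup α ≤ (magnusSubgroup α).comap (MulAut.conj g).toMonoidHom :=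
    (Subgroup.closure_le _).2 fun _ hv => hg.conj_mem_of_isMagnusGenerator hv
  exact hle hu

theorem inv_conj_mem_of_isNielsenGenerator {g u : MulAut (FreeGroup α)} (hg : IsNielsenGenerator g)
    (hu : u ∈ magnusSubgroup α) : g⁻¹ * u * g ∈ magnusSubgroup α := by
  cases hg with
  | permutation s => exact (IsNielsenGenerator.permutation s⁻¹).conj_mem hu
  | inversion a => exact (IsNielsenGenerator.inversion a).conj_mem hu
  | @transvection a b hab =>
    have hR := ((IsNielsenGenerator.inversion b).conj_mem <|
      (IsNielsenGenerator.transvection hab).conj_mem <|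
      (IsNielsenGenerator.inversion b).conj_mem hu)
    have hι : (inversion b)⁻¹ = inversion b := rfl
    have hinv := transvection_inv_eq hab
    have : transvection a b = inversion b * (transvection a b)⁻¹ * inversion b := by
      rw [← inv_inj, mul_inv_rev, mul_inv_rev, inv_inv, hι, ← mul_assoc, hinv]
    rw [hinv]
    nth_rw 2 [this]
    simpa [mul_assoc, hι] using hR

theorem nielsenSubgroup_le_normalizer :
    nielsenSubgroup α ≤ Subgroup.normalizer (magnusSubgroup α) := by
  refine (Subgroup.closure_le _).2 fun g hg => Subgroup.mem_normalizer_iff.2 fun u =>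
    ⟨hg.conj_mem, fun hu => ?_⟩
  simpa [mul_assoc] using inv_conj_mem_of_isNielsenGenerator hg hu

theorem magnusSubgroup_le_IA (n : ℕ) : magnusSubgroup (Fin n) ≤ IA n := by
  refine (Subgroup.closure_le _).2 fun u hu => ?_
  suffices h : Abelianization.of.comp u.toMonoidHom = Abelianization.of from DFunLike.congr_fun h
  refine FreeGroup.ext_hom _ _ fun k => ?_
  cases hu with
  | @partialConj i j hij =>
    rcases eq_or_ne k i with rfl | hk <;> simp [mul_comm, *]
  | @commTransvection i j l hij hil =>
    rcases eq_or_ne k i with rfl | hk <;> simp [commutatorElement_def, *]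

end MagnusSubgroup

section Cancellation

variable {α : Type*}

theorem exists_common_prefix {β : Type*} : ∀ x y : List β, ∃ c a b, x = c ++ a ∧ y = c ++ b ∧
    ∀ p ∈ a.head?, ∀ q ∈ b.head?, p ≠ q
  | [], y => ⟨[], [], y, rfl, rfl, by simp⟩
  | x, [] => ⟨[], x, [], rfl, rfl, by simp⟩
  | p :: x, q :: y => by
    by_cases h : p = q
    · obtain ⟨c, a, b, hx, hy, hab⟩ := exists_common_prefix x y
      exact ⟨p :: c, a, b, by simp [hx], by simp [h, hy], hab⟩
    · exact ⟨[], p :: x, q :: y, rfl, rfl, by simpa using h⟩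

theorem isReduced_invRev_append {a b : List (α × Bool)} (ha : IsReduced (invRev a))
    (hb : IsReduced b) (h : ∀ p ∈ a.head?, ∀ q ∈ b.head?, p ≠ q) : IsReduced (invRev a ++ b) := by
  refine List.isChain_append.2 ⟨ha, hb, ?_⟩
  rintro ⟨_, _⟩ hp ⟨j, d⟩ hq rfl
  have hlast : (invRev a).getLast? = a.head?.map fun p => (p.1, !p.2) := by simp [invRev]
  rw [hlast] at hp
  obtain ⟨⟨i, c⟩, hp', ⟨⟩⟩ := Option.mem_map.1 hp
  have hcd : c ≠ d := fun h' => h _ hp' _ hq (by rw [h'])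
  exact Bool.not_eq.2 hcd

variable [DecidableEq α]

theorem toWord_inv_mul {u v : FreeGroup α} {c a b : List (α × Bool)} (hu : u.toWord = c ++ a)
    (hv : v.toWord = c ++ b) (h : ∀ p ∈ a.head?, ∀ q ∈ b.head?, p ≠ q) :
    (u⁻¹ * v).toWord = invRev a ++ b := by
  have ha : IsReduced (invRev a) := by
    have : IsReduced (invRev (c ++ a)) := by rw [← hu, ← toWord_inv]; exact isReduced_toWord
    rw [FreeGroup.invRev_append] at this
    exact this.infix (List.prefix_append _ _).isInfix
  have hb : IsReduced b := (hv ▸ isReduced_toWord).infix (List.suffix_append _ _).isInfix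
  have huv : u⁻¹ * v = mk (invRev a ++ b) := by
    rw [← mk_toWord (x := u), ← mk_toWord (x := v), hu, hv]
    simp only [← FreeGroup.mul_mk, ← FreeGroup.inv_mk]
    group
  rw [huv, FreeGroup.toWord_mk, (isReduced_invRev_append ha hb h).reduce_eq]

/-- The length of the longest common prefix of the reduced words of `u` and `v`, that is, the
number of letters of each cancelled in the product `u⁻¹ * v`. -/
def prefixLength (u v : FreeGroup α) : ℕ := (u.norm + v.norm - (u⁻¹ * v).norm) / 2

theorem exists_toWord_eq_append (u v : FreeGroup α) : ∃ c a b, u.toWord = c ++ a ∧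
    v.toWord = c ++ b ∧ (u⁻¹ * v).toWord = invRev a ++ b ∧ prefixLength u v = c.length ∧
      ∀ p ∈ a.head?, ∀ q ∈ b.head?, p ≠ q := by
  obtain ⟨c, a, b, hu, hv, hab⟩ := exists_common_prefix u.toWord v.toWord
  have huv := toWord_inv_mul hu hv hab
  refine ⟨c, a, b, hu, hv, huv, ?_, hab⟩
  simp only [prefixLength, FreeGroup.norm, huv, hu, hv, List.length_append,
    FreeGroup.invRev_length]
  omega

theorem norm_inv_mul_add_prefixLength (u v : FreeGroup α) :
    (u⁻¹ * v).norm + 2 * prefixLength u v = u.norm + v.norm := by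
  obtain ⟨c, a, b, hu, hv, huv, hc, -⟩ := exists_toWord_eq_append u v
  simp only [FreeGroup.norm, hc, huv, hu, hv, List.length_append, FreeGroup.invRev_length]
  omega

theorem norm_mul_add_prefixLength (u v : FreeGroup α) :
    (u * v).norm + 2 * prefixLength u⁻¹ v = u.norm + v.norm := by
  simpa using norm_inv_mul_add_prefixLength u⁻¹ v

theorem le_prefixLength_iff {u v : FreeGroup α} {k : ℕ} : k ≤ prefixLength u v ↔
    k ≤ u.norm ∧ k ≤ v.norm ∧ u.toWord.take k = v.toWord.take k := by
  obtain ⟨c, a, b, hu, hv, -, hc, hab⟩ := exists_toWord_eq_append u v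
  simp only [FreeGroup.norm, hc, hu, hv, List.length_append]
  refine ⟨fun hk => ⟨by omega, by omega, ?_⟩, fun ⟨hka, hkb, htake⟩ => ?_⟩
  · rw [List.take_append_of_le_length hk, List.take_append_of_le_length hk]
  by_contra! hk
  obtain ⟨p, a, rfl⟩ := List.exists_cons_of_length_pos (l := a) (by omega)
  obtain ⟨q, b, rfl⟩ := List.exists_cons_of_length_pos (l := b) (by omega)
  refine hab p rfl q rfl ?_
  simpa [List.getElem?_take, hk] using congrArg (·[c.length]?) htake

theorem prefixLength_comm (u v : FreeGroup α) : prefixLength u v = prefixLength v u :=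
  eq_of_forall_le_iff fun k => by
    rw [le_prefixLength_iff, le_prefixLength_iff, and_left_comm, eq_comm]

theorem min_prefixLength_le (u v w : FreeGroup α) :
    min (prefixLength u v) (prefixLength v w) ≤ prefixLength u w := by
  obtain ⟨hu, -, huv⟩ := le_prefixLength_iff.1 (min_le_left (prefixLength u v) (prefixLength v w))
  obtain ⟨-, hw, hvw⟩ := le_prefixLength_iff.1 (min_le_right (prefixLength u v) (prefixLength v w))
  exact le_prefixLength_iff.2 ⟨hu, hw, huv.trans hvw⟩

theorem norm_lt_norm_mul_self {w : FreeGroup α} (hw : w ≠ 1) : w.norm < (w * w).norm := by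
  have hL := FreeGroup.reduceCyclically.conj_conjugator_reduceCyclically w.toWord
  have hsq := FreeGroup.toWord_pow w 2
  rw [FreeGroup.reduceCyclically.reduce_flatten_replicate isReduced_toWord] at hsq
  have hr : FreeGroup.reduceCyclically w.toWord ≠ [] := by
    intro hr
    refine hw ?_
    rw [← mk_toWord (x := w), ← hL, hr, List.append_nil, ← FreeGroup.mul_mk, ← FreeGroup.inv_mk,
      mul_inv_cancel]
  have := List.length_pos_iff.2 hr
  have hlen := congrArg List.length hL
  have hlen2 := congrArg List.length hsq
  simp only [OfNat.ofNat_ne_zero, if_false, List.length_append, List.length_flatten,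
    List.map_replicate, List.sum_replicate, smul_eq_mul, FreeGroup.invRev_length] at hlen hlen2
  rw [← sq, FreeGroup.norm, FreeGroup.norm]
  omega

theorem two_mul_prefixLength_inv_self_lt {w : FreeGroup α} (hw : w ≠ 1) :
    2 * prefixLength w⁻¹ w < w.norm := by
  have := norm_mul_add_prefixLength w w
  have := norm_lt_norm_mul_self hw
  omega

end Cancellation

section NielsenReduced

variable {α β : Type*} {f : FreeGroup α →* FreeGroup β} {s t u : α × Bool}

theorem inv_mk_singleton (s : α × Bool) : (mk [s])⁻¹ = mk [(s.1, !s.2)] := rfl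

theorem isReduced_pair_of_ne (h : s.1 ≠ t.1) : IsReduced [s, t] :=
  FreeGroup.isReduced_cons_cons.2 ⟨fun hst => absurd hst h, IsReduced.singleton⟩

theorem isReduced_pair_inv (h : IsReduced [s, t]) : IsReduced [(t.1, !t.2), (s.1, !s.2)] := by
  simp only [FreeGroup.isReduced_cons_cons, IsReduced.singleton, and_true] at h ⊢
  exact fun hi => congrArg _ (h hi.symm).symm

theorem map_mk_cons_cons (f : FreeGroup α →* FreeGroup β) (s t : α × Bool)
    (L : List (α × Bool)) : f (mk (s :: t :: L)) = f (mk [s]) * f (mk (t :: L)) := by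
  rw [← map_mul, FreeGroup.mul_mk, List.singleton_append]

variable [DecidableEq β]

/-- Nielsen's conditions on a homomorphism of free groups: in the image of a reduced word, at most
half of the image of a letter is cancelled by a neighbour, and its two neighbours never cancel
it completely. -/
structure IsNielsenReduced (f : FreeGroup α →* FreeGroup β) : Prop where
  intro ::
  two_mul_le_left {s t : α × Bool} (h : IsReduced [s, t]) :
    2 * prefixLength (f (mk [s]))⁻¹ (f (mk [t])) ≤ (f (mk [s])).norm
  add_lt {s t u : α × Bool} (h : IsReduced [s, t, u]) :
    prefixLength (f (mk [s]))⁻¹ (f (mk [t])) + prefixLength (f (mk [t]))⁻¹ (f (mk [u])) <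
      (f (mk [t])).norm

theorem IsNielsenReduced.norm_pos (hf : IsNielsenReduced f) (s : α × Bool) :
    0 < (f (mk [s])).norm :=
  (Nat.zero_le _).trans_lt (hf.add_lt (s := s) (t := s) (u := s) (by simp))

theorem IsNielsenReduced.two_mul_le_right (hf : IsNielsenReduced f) (h : IsReduced [s, t]) :
    2 * prefixLength (f (mk [s]))⁻¹ (f (mk [t])) ≤ (f (mk [t])).norm := by
  have := hf.two_mul_le_left (isReduced_pair_inv h)
  rwa [← inv_mk_singleton, ← inv_mk_singleton, map_inv, map_inv, inv_inv, norm_inv_eq,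
    prefixLength_comm] at this

theorem IsNielsenReduced.prefixLength_map_mk (hf : IsNielsenReduced f) {s t : α × Bool}
    {L : List (α × Bool)} (h : IsReduced (s :: t :: L)) :
    prefixLength (f (mk [s]))⁻¹ (f (mk (t :: L))) = prefixLength (f (mk [s]))⁻¹ (f (mk [t])) := by
  induction L generalizing s t with
  | nil => rfl
  | cons u L ih =>
    have htu := ih h.tail
    have hstu := hf.add_lt (h.infix (List.prefix_append [s, t, u] L).isInfix)
    have hlen := norm_inv_mul_add_prefixLength (f (mk [t])) (f (mk (t :: u :: L)))
    have hlen' := norm_mul_add_prefixLength (f (mk [t])) (f (mk (u :: L)))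
    rw [map_mk_cons_cons, inv_mul_cancel_left] at hlen
    rw [map_mk_cons_cons f t]
    have hs := min_prefixLength_le (f (mk [s]))⁻¹ (f (mk [t])) (f (mk [t]) * f (mk (u :: L)))
    have hs' := min_prefixLength_le (f (mk [s]))⁻¹ (f (mk [t]) * f (mk (u :: L))) (f (mk [t]))
    rw [prefixLength_comm _ (f (mk [t]))] at hs'
    omega

theorem IsNielsenReduced.norm_lt_norm_map_mk (hf : IsNielsenReduced f) {L : List (α × Bool)}
    (h : IsReduced (s :: t :: L)) :
    (f (mk [s])).norm < (f (mk (s :: t :: L))).norm + prefixLength (f (mk [s]))⁻¹ (f (mk [t])) := by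
  induction L generalizing s t with
  | nil =>
    have := hf.two_mul_le_right h
    have := norm_mul_add_prefixLength (f (mk [s])) (f (mk [t]))
    have := hf.norm_pos t
    rw [map_mk_cons_cons]
    omega
  | cons u L ih =>
    have := ih h.tail
    have := hf.add_lt (h.infix (List.prefix_append [s, t, u] L).isInfix)
    have := norm_mul_add_prefixLength (f (mk [s])) (f (mk (t :: u :: L)))
    rw [hf.prefixLength_map_mk h] at this
    rw [map_mk_cons_cons]
    omega

theorem IsNielsenReduced.exists_map_letter_eq_of (hf : IsNielsenReduced f)
    (hsurj : Function.Surjective f) (i : β) : ∃ s, f (mk [s]) = of i := by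
  classical
  obtain ⟨w, hw⟩ := hsurj (of i)
  have hred : IsReduced w.toWord := isReduced_toWord
  rw [← mk_toWord (x := w)] at hw
  have hnorm := congrArg FreeGroup.norm hw
  rw [FreeGroup.norm_of] at hnorm
  match w.toWord, hred, hw, hnorm with
  | [], _, _, hnorm => simp [← FreeGroup.one_eq_mk] at hnorm
  | [s], _, hw, _ => exact ⟨s, hw⟩
  | s :: t :: L, hred, _, hnorm =>
    have := hf.norm_lt_norm_map_mk hred
    have := hf.two_mul_le_left (h := hred.infix (List.prefix_append [s, t] L).isInfix)
    have := hf.norm_pos s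
    omega

end NielsenReduced

section LexRank

variable {β : Type*} [Fintype β]

/-- The rank of a word with respect to the lexicographic order coming from an arbitrary enumeration
of the alphabet; the base of the digit expansion only has to exceed `1` and all digits. -/
def lexRank (l : List β) : ℕ :=
  Nat.ofDigits (Fintype.card β + 2) (l.reverse.map fun s => (Fintype.equivFin β s : ℕ))

theorem lexRank_append_lt_append {l l' : List β} (z : List β) (h : lexRank l < lexRank l') :
    lexRank (l ++ z) < lexRank (l' ++ z) := by
  simp only [lexRank, List.reverse_append, List.map_append, Nat.ofDigits_append] at h ⊢
  gcongr

theorem eq_of_lexRank_eq {l l' : List β} (hl : l.length = l'.length)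
    (h : lexRank l = lexRank l') : l = l' := by
  have hdigit (l : List β) :
      ∀ d ∈ l.reverse.map fun s => (Fintype.equivFin β s : ℕ), d < Fintype.card β + 2 := by
    intro d hd
    obtain ⟨s, -, rfl⟩ := List.mem_map.1 hd
    have := (Fintype.equivFin β s).isLt
    omega
  have hmap := Nat.ofDigits_inj_of_len_eq (by omega) (by simp [hl]) (hdigit l) (hdigit l') h
  exact List.reverse_injective <|
    List.map_injective_iff.2 (Fin.val_injective.comp (Fintype.equivFin β).injective) hmap

end LexRank

section Complexity

variable {α : Type*} [DecidableEq α]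

theorem exists_mem_nielsenSubgroup_mul {s t : α × Bool} (h : s.1 ≠ t.1) :
    ∃ g ∈ nielsenSubgroup α, g (mk [s]) = mk [s] * mk [t] ∧ ∀ k ≠ s.1, g (of k) = of k := by
  obtain ⟨i, b⟩ := s
  obtain ⟨j, c⟩ := t
  replace h : i ≠ j := h
  have hR := transvection_mem_nielsenSubgroup i j
  have hι := inversion_mem_nielsenSubgroup i
  have hL : leftTransvection i j ∈ nielsenSubgroup α := mul_mem (mul_mem hι (inv_mem hR)) hι
  have hneg (k : α) : mk [(k, false)] = (of k)⁻¹ := rfl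
  have hpos (k : α) : mk [(k, true)] = of k := rfl
  cases b <;> cases c
  · exact ⟨_, hL, by simp [hneg, h], fun k hk => by simp_all⟩
  · exact ⟨_, inv_mem hL, by simp [hneg, hpos, h], fun k hk => by simp_all⟩
  · exact ⟨_, inv_mem hR, by simp [hneg, hpos, h], fun k hk => by simp_all⟩
  · exact ⟨_, hR, by simp [hpos, h], fun k hk => by simp_all⟩

omit [DecidableEq α] in
theorem map_mk_singleton_ne_one (e : MulAut (FreeGroup α)) (s : α × Bool) : e (mk [s]) ≠ 1 := by
  classical
  rw [map_ne_one_iff e e.injective, ← FreeGroup.toWord_injective.ne_iff, FreeGroup.toWord_mk]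
  simp

variable [Fintype α]

/-- The length of `w`, ties being broken by the ranks of the initial halves of `w` and `w⁻¹`. -/
def weight (w : FreeGroup α) : ℕ ×ₗ ℕ :=
  toLex (w.norm, lexRank (w.toWord.take ((w.norm + 1) / 2)) +
    lexRank (w⁻¹.toWord.take ((w.norm + 1) / 2)))

@[simp]
theorem weight_inv (w : FreeGroup α) : weight w⁻¹ = weight w := by
  simp only [weight, norm_inv_eq, inv_inv, add_comm]

theorem weight_lt_of_norm_lt {u v : FreeGroup α} (h : u.norm < v.norm) : weight u < weight v :=
  Prod.Lex.toLex_lt_toLex.2 (Or.inl h)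

theorem weight_mul_lt_of_lexRank_lt {u v : FreeGroup α} {k : ℕ} (hv : v.norm = 2 * k)
    (hu : 2 * k ≤ u.norm) (hk : prefixLength u⁻¹ v = k)
    (hr : lexRank (v⁻¹.toWord.take k) < lexRank (v.toWord.take k)) :
    weight (u * v) < weight u := by
  obtain ⟨c, a, b, hcu, hcv, huv, hc, -⟩ := exists_toWord_eq_append u⁻¹ v
  rw [inv_inv] at huv
  have hnorm : (u * v).norm = u.norm := by
    have := norm_mul_add_prefixLength u v
    omega
  have hu' : u.toWord = invRev a ++ invRev c := by
    rw [← FreeGroup.invRev_append, ← hcu, toWord_inv, FreeGroup.invRev_invRev]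
  have huv' : (u * v)⁻¹.toWord = invRev b ++ a := by
    rw [toWord_inv, huv, FreeGroup.invRev_append, FreeGroup.invRev_invRev]
  have hlu : u.norm = c.length + a.length := by
    rw [← norm_inv_eq, FreeGroup.norm, hcu, List.length_append]
  have hlv : v.norm = c.length + b.length := by rw [FreeGroup.norm, hcv, List.length_append]
  rw [toWord_inv, hcv, FreeGroup.invRev_append, List.take_left' (by simp; omega),
    List.take_left' (by omega)] at hr
  refine Prod.Lex.toLex_lt_toLex.2 (Or.inr ⟨hnorm, ?_⟩)
  have hm : (u.norm + 1) / 2 ≤ (invRev a).length := by rw [FreeGroup.invRev_length]; omega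
  simp only [hnorm, huv, huv', hcu, hu', List.take_append_of_le_length hm]
  rw [List.take_append (l₁ := invRev b), List.take_append (l₁ := c),
    List.take_of_length_le (l := invRev b) (by rw [FreeGroup.invRev_length]; omega),
    List.take_of_length_le (l := c) (by omega), FreeGroup.invRev_length,
    show b.length = c.length by omega]
  exact Nat.add_lt_add_left (lexRank_append_lt_append _ hr) _

/-- The total weight of the images of the generators. -/
def complexity (e : MulAut (FreeGroup α)) : ℕ ×ₗ ℕ := ∑ i, weight (e (of i))

/-- No product with elements of the Nielsen subgroup lowers the complexity of `e`. -/
def IsNielsenMinimal (e : MulAut (FreeGroup α)) : Prop :=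
  ∀ h ∈ nielsenSubgroup α, complexity e ≤ complexity (e * h)

theorem exists_isNielsenMinimal_mul (e : MulAut (FreeGroup α)) :
    ∃ h ∈ nielsenSubgroup α, IsNielsenMinimal (e * h) := by
  obtain ⟨h, hh, hmin⟩ := exists_minimalFor_of_wellFoundedLT (· ∈ nielsenSubgroup α)
    (fun h => complexity (e * h)) ⟨1, one_mem _⟩
  refine ⟨h, hh, fun g hg => ?_⟩
  rw [mul_assoc]
  exact (le_total _ _).elim id (hmin (mul_mem hh hg))

theorem weight_map_letter (e : MulAut (FreeGroup α)) (s : α × Bool) :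
    weight (e (mk [s])) = weight (e (of s.1)) := by
  obtain ⟨i, b | b⟩ := s
  · rw [← weight_inv, ← map_inv]; rfl
  · rfl

variable {e : MulAut (FreeGroup α)} {s t u : α × Bool}

theorem IsNielsenMinimal.weight_le (he : IsNielsenMinimal e) (h : s.1 ≠ t.1) :
    weight (e (mk [s])) ≤ weight (e (mk [s]) * e (mk [t])) := by
  by_contra! hlt
  obtain ⟨g, hg, hgs, hgk⟩ := exists_mem_nielsenSubgroup_mul h
  rw [← map_mul, ← hgs, ← MulAut.mul_apply, weight_map_letter, weight_map_letter] at hlt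
  refine (he g hg).not_gt (Finset.sum_lt_sum (fun k _ => ?_) ⟨s.1, Finset.mem_univ _, hlt⟩)
  rcases eq_or_ne k s.1 with rfl | hk
  · exact hlt.le
  · rw [MulAut.mul_apply, hgk k hk]

theorem IsNielsenMinimal.two_mul_le_right (he : IsNielsenMinimal e) (h : IsReduced [s, t]) :
    2 * prefixLength (e (mk [s]))⁻¹ (e (mk [t])) ≤ (e (mk [t])).norm := by
  by_cases hst : s.1 = t.1
  · obtain rfl : s = t := Prod.ext hst ((FreeGroup.isReduced_cons_cons.1 h).1 hst)
    exact (two_mul_prefixLength_inv_self_lt (map_mk_singleton_ne_one e s)).le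
  · have := not_lt.1 (mt weight_lt_of_norm_lt (he.weight_le hst).not_gt)
    have := norm_mul_add_prefixLength (e (mk [s])) (e (mk [t]))
    omega

theorem IsNielsenMinimal.two_mul_le_left (he : IsNielsenMinimal e) (h : IsReduced [s, t]) :
    2 * prefixLength (e (mk [s]))⁻¹ (e (mk [t])) ≤ (e (mk [s])).norm := by
  have := he.two_mul_le_right (isReduced_pair_inv h)
  rwa [← inv_mk_singleton, ← inv_mk_singleton, map_inv, map_inv, inv_inv, norm_inv_eq,
    prefixLength_comm] at this

theorem IsNielsenMinimal.lexRank_le (he : IsNielsenMinimal e) (h : s.1 ≠ t.1) {k : ℕ}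
    (hnorm : (e (mk [t])).norm = 2 * k) (hk : prefixLength (e (mk [s]))⁻¹ (e (mk [t])) = k) :
    lexRank ((e (mk [t])).toWord.take k) ≤ lexRank ((e (mk [t]))⁻¹.toWord.take k) := by
  by_contra! hr
  have hle := he.two_mul_le_left (isReduced_pair_of_ne h)
  exact (he.weight_le h).not_gt (weight_mul_lt_of_lexRank_lt hnorm (hk ▸ hle) hk hr)

theorem IsNielsenMinimal.add_lt (he : IsNielsenMinimal e) (h : IsReduced [s, t, u]) :
    prefixLength (e (mk [s]))⁻¹ (e (mk [t])) + prefixLength (e (mk [t]))⁻¹ (e (mk [u])) <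
      (e (mk [t])).norm := by
  by_contra! hc
  rw [FreeGroup.isReduced_cons_cons] at h
  have htu := (FreeGroup.isReduced_cons_cons.1 h.2).1
  have hst := he.two_mul_le_right (FreeGroup.isReduced_cons_cons.2 ⟨h.1, IsReduced.singleton⟩)
  have hut := he.two_mul_le_left h.2
  have hself := two_mul_prefixLength_inv_self_lt (map_mk_singleton_ne_one e t)
  obtain ⟨k, hk⟩ : ∃ k, prefixLength (e (mk [s]))⁻¹ (e (mk [t])) = k := ⟨_, rfl⟩
  have hk' : prefixLength (e (mk [t]))⁻¹ (e (mk [u])) = k := by omega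
  have hnorm : (e (mk [t])).norm = 2 * k := by omega
  have hne : s.1 ≠ t.1 := by
    intro hi
    obtain rfl : s = t := Prod.ext hi (h.1 hi)
    omega
  have hne' : u.1 ≠ t.1 := by
    intro hi
    obtain rfl : t = u := Prod.ext hi.symm (htu hi.symm)
    omega
  have hle := he.lexRank_le hne hnorm hk
  have hge := he.lexRank_le (s := (u.1, !u.2)) (t := (t.1, !t.2)) hne' (k := k)
  simp only [← inv_mk_singleton, map_inv, norm_inv_eq, inv_inv] at hge
  have hrank := hle.antisymm (hge hnorm (by rw [prefixLength_comm, hk']))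
  have htake := eq_of_lexRank_eq (by simp [FreeGroup.invRev_length]) hrank
  have hkk : k ≤ prefixLength (e (mk [t]))⁻¹ (e (mk [t])) :=
    le_prefixLength_iff.2 ⟨by rw [norm_inv_eq]; omega, by omega, htake.symm⟩
  omega

theorem IsNielsenMinimal.isNielsenReduced (he : IsNielsenMinimal e) :
    IsNielsenReduced e.toMonoidHom where
  two_mul_le_left := he.two_mul_le_left
  add_lt := he.add_lt

end Complexity

section NielsenTheorem

variable {α : Type*} [DecidableEq α]

theorem exists_mem_nielsenSubgroup_inv (S : Finset α) :
    ∃ h ∈ nielsenSubgroup α, ∀ i, h (of i) = if i ∈ S then (of i)⁻¹ else of i := by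
  induction S using Finset.induction_on with
  | empty => exact ⟨1, one_mem _, by simp⟩
  | insert a S ha ih =>
    obtain ⟨h, hh, hS⟩ := ih
    refine ⟨h * inversion a, mul_mem hh (inversion_mem_nielsenSubgroup a), fun i => ?_⟩
    rcases eq_or_ne i a with rfl | hi
    · simp [hS, ha]
    · simp [hS, hi]

variable [Finite α]

theorem mem_nielsenSubgroup_of_forall_eq_mk_singleton {e : MulAut (FreeGroup α)}
    (he : ∀ i, ∃ s, e (of i) = mk [s]) : e ∈ nielsenSubgroup α := by
  choose f hf using he
  have hinj : Function.Injective fun i => (f i).1 := by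
    intro i j hij
    have hletter : f i = f j ∨ f i = ((f j).1, !(f j).2) := by
      rcases Bool.eq_or_eq_not (f i).2 (f j).2 with h | h
      · exact Or.inl (Prod.ext hij h)
      · exact Or.inr (Prod.ext hij h)
    rcases hletter with h | h
    · exact FreeGroup.of_injective (e.injective (by rw [hf, hf, h]))
    · have hinv : e (of i) = e (of j)⁻¹ := by rw [map_inv, hf, hf, h, inv_mk_singleton]
      have := congrArg FreeGroup.toWord (e.injective hinv)
      simp [toWord_inv, invRev] at this
  have := Fintype.ofFinite α
  let σ := Equiv.ofBijective _ (Finite.injective_iff_bijective.1 hinj)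
  obtain ⟨h, hh, hsign⟩ := exists_mem_nielsenSubgroup_inv {i | (f i).2 = false}
  have : e = permutation σ * h := by
    refine ext_of fun i => ?_
    have hσ : permutation σ (of i) = of (f i).1 := permutation_apply σ i
    rw [hf, MulAut.mul_apply, hsign, ← Prod.mk.eta (p := f i)]
    cases hi : (f i).2
    · rw [if_pos (by simp [hi]), map_inv, hσ]
      rfl
    · rw [if_neg (by simp [hi]), hσ]
      rfl
  rw [this]
  exact mul_mem (permutation_mem_nielsenSubgroup σ) hh

theorem nielsenSubgroup_eq_top : nielsenSubgroup α = ⊤ := by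
  have := Fintype.ofFinite α
  refine (Subgroup.eq_top_iff' _).2 fun e => ?_
  obtain ⟨h, hh, hmin⟩ := exists_isNielsenMinimal_mul e
  have hsurj : Function.Surjective (e * h).toMonoidHom := (e * h).surjective
  have hmem : (e * h)⁻¹ ∈ nielsenSubgroup α := by
    refine mem_nielsenSubgroup_of_forall_eq_mk_singleton fun i => ?_
    obtain ⟨s, hs⟩ := hmin.isNielsenReduced.exists_map_letter_eq_of hsurj i
    exact ⟨s, by rw [← hs]; exact (e * h).symm_apply_apply _⟩
  exact (Subgroup.mul_mem_cancel_right _ hh).1 (inv_mem_iff.1 hmem)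

instance magnusSubgroup_normal : (magnusSubgroup α).Normal := by
  rw [← Subgroup.normalizer_eq_top_iff, eq_top_iff, ← nielsenSubgroup_eq_top]
  exact nielsenSubgroup_le_normalizer

end NielsenTheorem

section AffineLine

variable {K : Type*} [DivisionRing K] {f g : K ≃ᵃ[K] K} {p q : K}

theorem linear_apply_sub (f : K ≃ᵃ[K] K) (p q : K) : f.linear (p - q) = f p - f q :=
  f.toAffineMap.linearMap_vsub p q

theorem existsUnique_apply_eq (hf : f.linear ≠ 1) : ∃! q, f q = q := by
  have hc : f.linear 1 ≠ 1 := fun h => hf (LinearEquiv.ext fun x => by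
    rw [← mul_one x, ← smul_eq_mul, map_smul, h]; rfl)
  have hlin (x : K) : f.linear x = x * f.linear 1 := by
    rw [← smul_eq_mul, ← map_smul, smul_eq_mul, mul_one]
  have hdecomp (x : K) : f x = x * f.linear 1 + f 0 := by
    rw [← hlin, ← sub_eq_iff_eq_add, ← linear_apply_sub, sub_zero]
  have hfix (q : K) : f q = q ↔ q = f 0 * (1 - f.linear 1)⁻¹ := by
    rw [eq_mul_inv_iff_mul_eq₀ (sub_ne_zero.2 hc.symm), hdecomp q, mul_sub, mul_one,
      sub_eq_iff_eq_add', eq_comm]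
  exact ⟨_, (hfix _).2 rfl, fun q => (hfix q).1⟩

theorem eq_one_of_linear_eq_one (hf : f.linear = 1) (hq : f q = q) : f = 1 :=
  AffineEquiv.ext fun x => by
    have := linear_apply_sub f x q
    rw [hf, hq] at this
    exact (sub_left_inj.1 this).symm

theorem apply_eq_of_commute (hf : f.linear ≠ 1) (hq : f q = q) (hfg : Commute f g) : g q = q :=
  (existsUnique_apply_eq hf).unique ((DFunLike.congr_fun hfg.eq q).trans (congrArg g hq)) hq

end AffineLine

section AffineAction

variable {K G : Type*} [DivisionRing K] [Group G] {N : Subgroup G}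

/-- The elements of `N` fixing the point `q` of the line, as a subgroup of the ambient group. -/
def fixer (ρ : N →* (K ≃ᵃ[K] K)) (q : K) : Subgroup G :=
  Subgroup.map N.subtype
    { carrier := {u | ρ u q = q}
      one_mem' := by simp
      mul_mem' := fun {u v} hu hv => by
        rw [Set.mem_ofPred_eq, map_mul, AffineEquiv.coe_mul, Function.comp_apply, hv, hu]
      inv_mem' := fun {u} hu => by
        rw [Set.mem_ofPred_eq, map_inv, AffineEquiv.inv_def, AffineEquiv.symm_apply_eq, hu] }

/-- The elements of `N` acting on the line by translations, as a subgroup of the ambient group. -/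
def translations (ρ : N →* (K ≃ᵃ[K] K)) : Subgroup G :=
  (AffineEquiv.linearHom.comp ρ).ker.map N.subtype

/-- The action `u ↦ ρ (g u g⁻¹)` of `N`. -/
def conjAction [N.Normal] (ρ : N →* (K ≃ᵃ[K] K)) (g : G) : N →* (K ≃ᵃ[K] K) :=
  ρ.comp (MulAut.conjNormal g).toMonoidHom

/-- All elements of `N` have a common fixed point on the line. -/
def HasFixedPoint (ρ : N →* (K ≃ᵃ[K] K)) : Prop := ∃ q, N ≤ fixer ρ q

variable {ρ : N →* (K ≃ᵃ[K] K)} {a b x y g : G} {q q' : K}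

@[simp]
theorem coe_mem_fixer {u : N} : (u : G) ∈ fixer ρ q ↔ ρ u q = q :=
  Subgroup.mem_map_iff_mem N.subtype_injective

@[simp]
theorem coe_mem_translations {u : N} : (u : G) ∈ translations ρ ↔ (ρ u).linear = 1 :=
  Subgroup.mem_map_iff_mem N.subtype_injective

theorem commute_map_of_commute_coe {M : Type*} [Monoid M] (f : N →* M) {u v : N}
    (h : Commute (u : G) v) : Commute (f u) (f v) := by
  have : Commute u v := Subtype.ext h
  exact this.map f

theorem fixer_le (ρ : N →* (K ≃ᵃ[K] K)) (q : K) : fixer ρ q ≤ N := Subgroup.map_subtype_le _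

theorem translations_le (ρ : N →* (K ≃ᵃ[K] K)) : translations ρ ≤ N := Subgroup.map_subtype_le _

theorem exists_mem_fixer (ha : a ∈ N) (haT : a ∉ translations ρ) : ∃ q, a ∈ fixer ρ q := by
  lift a to N using ha
  rw [coe_mem_translations] at haT
  exact (existsUnique_apply_eq haT).exists.imp fun _ => coe_mem_fixer.2

theorem eq_of_mem_fixer (haT : a ∉ translations ρ) (ha : a ∈ fixer ρ q) (ha' : a ∈ fixer ρ q') :
    q = q' := by
  lift a to N using fixer_le ρ q ha
  rw [coe_mem_translations] at haT
  exact (existsUnique_apply_eq haT).unique (coe_mem_fixer.1 ha) (coe_mem_fixer.1 ha')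

theorem mem_fixer_of_commute (haT : a ∉ translations ρ) (ha : a ∈ fixer ρ q) (hb : b ∈ N)
    (hab : Commute a b) : b ∈ fixer ρ q := by
  lift b to N using hb
  lift a to N using fixer_le ρ q ha
  rw [coe_mem_translations] at haT
  rw [coe_mem_fixer] at ha ⊢
  exact apply_eq_of_commute haT ha (commute_map_of_commute_coe ρ hab)

theorem mem_fixer_of_commute_mul {t : G} (htT : t ∈ translations ρ) (ht : t ∈ fixer ρ q)
    (hyT : y ∉ translations ρ) (hy : y ∈ fixer ρ q) (ha : a ∈ N) (hx : x ∈ N)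
    (hax : Commute a x) (htaxy : Commute (t * a) (x * y)) : a ∈ fixer ρ q := by
  lift t to N using fixer_le ρ q ht
  lift y to N using fixer_le ρ q hy
  lift a to N using ha
  lift x to N using hx
  rw [coe_mem_translations] at htT hyT
  rw [coe_mem_fixer] at ht hy ⊢
  have hax' : Commute (ρ a) (ρ x) := commute_map_of_commute_coe ρ hax
  have htaxy' : Commute (ρ (t * a)) (ρ (x * y)) := commute_map_of_commute_coe ρ htaxy
  rw [map_mul, eq_one_of_linear_eq_one htT ht, one_mul, map_mul] at htaxy'
  have hay := hax'.inv_right.mul_right htaxy'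
  rw [inv_mul_cancel_left] at hay
  exact apply_eq_of_commute hyT hy hay.symm

variable [N.Normal]

theorem mem_iff_of_semiconjBy (h : SemiconjBy g a b) : a ∈ N ↔ b ∈ N := by
  obtain rfl : g * a * g⁻¹ = b := mul_inv_eq_of_eq_mul h
  rw [Subgroup.Normal.mem_comm_iff ‹_›, inv_mul_cancel_left]

theorem coe_conjNormal_eq {u : N} (h : SemiconjBy g u b) : (MulAut.conjNormal g u : G) = b :=
  mul_inv_eq_of_eq_mul h

theorem mem_fixer_conjAction_iff (h : SemiconjBy g a b) :
    a ∈ fixer (conjAction ρ g) q ↔ b ∈ fixer ρ q := by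
  by_cases ha : a ∈ N
  · lift a to N using ha
    rw [← coe_conjNormal_eq h, coe_mem_fixer, coe_mem_fixer]
    rfl
  · exact iff_of_false (mt (fixer_le _ q ·) ha)
      (mt (fixer_le ρ q ·) (mt (mem_iff_of_semiconjBy h).2 ha))

theorem mem_translations_conjAction_iff (h : SemiconjBy g a b) :
    a ∈ translations (conjAction ρ g) ↔ b ∈ translations ρ := by
  by_cases ha : a ∈ N
  · lift a to N using ha
    rw [← coe_conjNormal_eq h, coe_mem_translations, coe_mem_translations]
    rfl
  · exact iff_of_false (mt (translations_le _ ·) ha)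
      (mt (translations_le ρ ·) (mt (mem_iff_of_semiconjBy h).2 ha))

theorem HasFixedPoint.of_conjAction (h : HasFixedPoint (conjAction ρ g)) : HasFixedPoint ρ :=
  h.imp fun _ hq u hu =>
    have hconj : SemiconjBy g (g⁻¹ * u * g) u := by simp [SemiconjBy, mul_assoc]
    (mem_fixer_conjAction_iff hconj).1 (hq ((mem_iff_of_semiconjBy hconj).2 hu))

end AffineAction

section InnerAutomorphisms

variable {α : Type*}

theorem commute_conj {u : MulAut (FreeGroup α)} {w : FreeGroup α} (h : u w = w) :
    Commute (MulAut.conj w) u := by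
  ext x
  simp [h]

theorem semiconjBy_conj (u : MulAut (FreeGroup α)) (w : FreeGroup α) :
    SemiconjBy u (MulAut.conj w) (MulAut.conj (u w)) := by
  ext x
  simp

variable [DecidableEq α] {H : Subgroup (MulAut (FreeGroup α))} {i j : α}

theorem exists_mem_conj_of_mem (s : Finset α) (hj : j ∉ s) (h : ∀ i ∈ s, partialConj i j ∈ H) :
    ∃ u ∈ H, ∀ l, u (of l) = if l ∈ s then (of j)⁻¹ * of l * of j else of l := by
  induction s using Finset.induction_on with
  | empty => exact ⟨1, one_mem _, by simp⟩
  | insert i s his ih =>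
    rw [Finset.mem_insert, not_or] at hj
    obtain ⟨u, hu, hus⟩ := ih hj.2 fun k hk => h k (Finset.mem_insert_of_mem hk)
    refine ⟨partialConj i j * u, mul_mem (h i (Finset.mem_insert_self i s)) hu, fun l => ?_⟩
    rcases eq_or_ne l i with rfl | hli
    · simp [hus, his, Ne.symm hj.1]
    · by_cases hls : l ∈ s <;> simp [hus, hls, hli, hj.1, Ne.symm hj.1]

theorem exists_mul_of_mem (s : Finset α) (hj : j ∉ s) :
    ∃ u : MulAut (FreeGroup α), ∀ l, u (of l) = if l ∈ s then of l * of j else of l := by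
  induction s using Finset.induction_on with
  | empty => exact ⟨1, by simp⟩
  | insert i s his ih =>
    rw [Finset.mem_insert, not_or] at hj
    obtain ⟨u, hus⟩ := ih hj.2
    refine ⟨transvection i j * u, fun l => ?_⟩
    rcases eq_or_ne l i with rfl | hli
    · simp [hus, his, Ne.symm hj.1]
    · by_cases hls : l ∈ s <;> simp [hus, hls, hli, hj.1, Ne.symm hj.1]

variable [Finite α]

theorem conj_of_mem (h : ∀ i ≠ j, partialConj i j ∈ H) : MulAut.conj (of j) ∈ H := by
  have := Fintype.ofFinite α
  obtain ⟨u, hu, hus⟩ := exists_mem_conj_of_mem (Finset.univ.erase j) (Finset.notMem_erase j _)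
    fun i hi => h i (Finset.ne_of_mem_erase hi)
  have hconj : u = MulAut.conj (of j)⁻¹ := ext_of fun l => by
    rcases eq_or_ne l j with rfl | hlj <;> simp [*]
  rw [hconj, map_inv] at hu
  exact inv_mem_iff.1 hu

theorem partialConj_mem_of_conj_mem (hij : i ≠ j) (h : ∀ k, k ≠ i → k ≠ j → partialConj k j ∈ H)
    (hj : MulAut.conj (of j) ∈ H) : partialConj i j ∈ H := by
  have := Fintype.ofFinite α
  obtain ⟨u, hu, hus⟩ := exists_mem_conj_of_mem (H := H) ((Finset.univ.erase j).erase i)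
    (by simp) fun k hk => h k (by grind) (by grind)
  have hconj : partialConj i j * u = MulAut.conj (of j)⁻¹ := ext_of fun l => by
    rcases eq_or_ne l j with rfl | hlj
    · simp [hus, hij, hij.symm]
    · rcases eq_or_ne l i with rfl | hli <;> simp [hij.symm, *]
  rw [← Subgroup.mul_mem_cancel_right _ hu, hconj, map_inv]
  exact inv_mem hj

theorem conj_mem_magnusSubgroup (w : FreeGroup α) : MulAut.conj w ∈ magnusSubgroup α := by
  suffices (⊤ : Subgroup (FreeGroup α)) ≤ (magnusSubgroup α).comap MulAut.conj from this trivial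
  rw [← FreeGroup.closure_range_of, Subgroup.closure_le]
  rintro _ ⟨j, rfl⟩
  exact conj_of_mem fun i _ => partialConj_mem i j

end InnerAutomorphisms

theorem exists_ne_ne_ne {α : Type*} (hα : 4 ≤ ENat.card α) (a b c : α) :
    ∃ l, a ≠ l ∧ b ≠ l ∧ c ≠ l := by
  classical
  obtain ⟨l, hl⟩ : ∃ l, l ∉ ({a, b, c} : Finset α) := by
    by_contra! h
    let _ : Fintype α := ⟨{a, b, c}, h⟩
    rw [ENat.card_eq_coe_fintype_card] at hα
    exact absurd (Nat.cast_le.1 hα) (Finset.card_le_three.trans_lt (Nat.lt_succ_self 3)).not_ge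
  simp only [Finset.mem_insert, Finset.mem_singleton, not_or] at hl
  exact ⟨l, Ne.symm hl.1, Ne.symm hl.2.1, Ne.symm hl.2.2⟩

section CommonFixedPoint

variable {α K : Type*} [DecidableEq α] [DivisionRing K]
  {ρ : magnusSubgroup α →* (K ≃ᵃ[K] K)} {q : K} {a b i j k l : α}

theorem commTransvection_eq_commutator (hik : i ≠ k) (hji : j ≠ i) :
    commTransvection i k j = ⁅transvection i k, partialConj i j⁆ := by
  rw [commutatorElement_def, (transvection_partialConj_aj hik hji).eq]
  group

theorem hasFixedPoint_of_generators (hC : ∀ i j, i ≠ j → partialConj i j ∈ fixer ρ q)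
    (hM : ∀ i j k, i ≠ j → i ≠ k → j ≠ k → commTransvection i j k ∈ fixer ρ q) :
    HasFixedPoint ρ := by
  refine ⟨q, (Subgroup.closure_le _).2 fun u hu => ?_⟩
  cases hu with
  | partialConj hij => exact hC _ _ hij
  | commTransvection hij hik hjk => exact hM _ _ _ hij hik hjk

theorem partialConj_mem_fixer_and (hij : i ≠ j) (hik : i ≠ k) (hjk : j ≠ k) (hil : i ≠ l)
    (hjl : j ≠ l) (hkl : k ≠ l) (hT : partialConj i j ∉ translations ρ)
    (hq : partialConj i j ∈ fixer ρ q) :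
    partialConj i k ∈ fixer ρ q ∧ partialConj j k ∈ fixer ρ q := by
  have hprod : partialConj i k * partialConj j k ∈ fixer ρ q :=
    mem_fixer_of_commute hT hq (mul_mem (partialConj_mem i k) (partialConj_mem j k))
      (commute_partialConj_mul_partialConj hij hik hjk)
  suffices partialConj i k ∈ fixer ρ q ∨ partialConj j k ∈ fixer ρ q from
    this.elim (fun h => ⟨h, (Subgroup.mul_mem_cancel_left _ h).1 hprod⟩)
      fun h => ⟨(Subgroup.mul_mem_cancel_right _ h).1 hprod, h⟩
  set κ := (partialConj l k)⁻¹ * commTransvection l k j * partialConj l k with hκ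
  have hcomm {m : α} (him : i ≠ m) (hlm : l ≠ m) : Commute (partialConj i m) κ := by
    have hC := commute_partialConj him hkl.symm hil hik hlm
    have hM := commute_partialConj_commTransvection him hkl.symm hjl.symm hil hik hij hlm
    exact (hC.inv_right.mul_right hM).mul_right hC
  have hκN : κ ∈ magnusSubgroup α := by simp (maxDischargeDepth := 10) [hκ, mul_mem]
  have hκq : κ ∈ fixer ρ q := mem_fixer_of_commute hT hq hκN (hcomm hij hjl.symm)
  by_cases hκT : κ ∈ translations ρ
  · right
    -- Conjugate the relation between `partialConj j k` and `partialConj i l` by a transvection.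
    have hR := transvection_partialConj_bj hjl.symm hkl hjk.symm
    have hR' := transvection_partialConj_ia hjl.symm hil hij
    have hjkil := commute_partialConj hjk hil hij.symm hjl hik
    refine mem_fixer_of_commute_mul hκT hκq hT hq (partialConj_mem j k) (partialConj_mem i l)
      hjkil ?_
    rw [← mul_inv_eq_of_eq_mul hR, ← mul_inv_eq_of_eq_mul hR']
    exact (SemiconjBy.conj_iff).2 hjkil
  · exact Or.inl (mem_fixer_of_commute hκT hκq (partialConj_mem i k) (hcomm hik hkl.symm).symm)

theorem partialConj_mem_fixer (hα : 4 ≤ ENat.card α) (hab : a ≠ b) (hij : i ≠ j) (hja : j ≠ a)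
    (hT : partialConj a b ∉ translations ρ) (hq : partialConj a b ∈ fixer ρ q) :
    partialConj i j ∈ fixer ρ q := by
  obtain ⟨l, hal, hbl, hjl⟩ := exists_ne_ne_ne hα a b j
  by_cases hia : i = a
  · subst hia
    by_cases hjb : j = b
    · exact hjb ▸ hq
    · exact (partialConj_mem_fixer_and hab hij (Ne.symm hjb) hal hbl hjl hT hq).1
  by_cases hib : i = b
  · subst hib
    exact (partialConj_mem_fixer_and hab hja.symm hij hal hbl hjl hT hq).2
  · exact mem_fixer_of_commute hT hq (partialConj_mem i j)
      (commute_partialConj hab hij (Ne.symm hia) hja.symm hib)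

variable [Finite α]

theorem commTransvection_mem_fixer_of_semiconjBy (hα : 4 ≤ ENat.card α)
    {v : MulAut (FreeGroup α)} (hab : a ≠ b) (hij : i ≠ j) (hik : i ≠ k) (hja : j ≠ a)
    (hv : SemiconjBy (transvection i k) (partialConj a b) v) (hvT : v ∉ translations ρ)
    (hvq : v ∈ fixer ρ q) (hC : partialConj i j ∈ fixer ρ q) :
    commTransvection i k j ∈ fixer ρ q := by
  rw [commTransvection_eq_commutator hik hij.symm, commutatorElement_def]
  refine mul_mem ?_ (inv_mem hC)
  rw [← mem_fixer_conjAction_iff (mul_inv_eq_iff_eq_mul.1 rfl)]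
  exact partialConj_mem_fixer hα hab hij hja (mt (mem_translations_conjAction_iff hv).1 hvT)
    ((mem_fixer_conjAction_iff hv).2 hvq)

theorem commTransvection_mem_fixer_of_ne (hα : 4 ≤ ENat.card α) (hab : a ≠ b) (hij : i ≠ j)
    (hik : i ≠ k) (hai : a ≠ i) (haj : a ≠ j) (hak : a ≠ k)
    (hT : partialConj a b ∉ translations ρ) (hq : partialConj a b ∈ fixer ρ q) :
    commTransvection i k j ∈ fixer ρ q := by
  have hC : partialConj i j ∈ fixer ρ q := partialConj_mem_fixer hα hab hij haj.symm hT hq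
  rcases ne_or_eq b i with hbi | rfl
  · exact commTransvection_mem_fixer_of_semiconjBy hα hab hij hik haj.symm
      (transvection_partialConj_ij hik hai hak hbi hab) hT hq hC
  have hk : partialConj a k ∈ fixer ρ q := partialConj_mem_fixer hα hab hak hak.symm hT hq
  by_cases hkT : partialConj a k ∈ translations ρ
  · exact commTransvection_mem_fixer_of_semiconjBy hα hab hij hik haj.symm
      (transvection_partialConj_ia hik hab hak)
      (mt (Subgroup.mul_mem_cancel_right _ hkT).1 hT) (mul_mem hq hk) hC
  · exact commTransvection_mem_fixer_of_semiconjBy hα hak hij hik haj.symm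
      (transvection_partialConj_ij hik hai hak hik.symm hak) hkT hk hC

theorem commTransvection_mem_fixer (hα : 4 ≤ ENat.card α) (hij : i ≠ j) (hik : i ≠ k)
    (hT : partialConj i k ∉ translations ρ) (hq : partialConj i k ∈ fixer ρ q) :
    commTransvection i k j ∈ fixer ρ q :=
  commTransvection_mem_fixer_of_semiconjBy hα hik hij hik hij.symm (transvection_partialConj_ab hik)
    hT hq (partialConj_mem_fixer hα hik hij hij.symm hT hq)

theorem hasFixedPoint_of_partialConj_notMem (hα : 4 ≤ ENat.card α) (hij : i ≠ j) (hik : i ≠ k)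
    (hjk : j ≠ k) (hijT : partialConj i j ∉ translations ρ)
    (hjiT : partialConj j i ∉ translations ρ) (hkjT : partialConj k j ∉ translations ρ) :
    HasFixedPoint ρ := by
  obtain ⟨q, hijq⟩ := exists_mem_fixer (partialConj_mem i j) hijT
  have hkjq := partialConj_mem_fixer hα hij hjk.symm hij.symm hijT hijq
  have hjiq := partialConj_mem_fixer hα hjk.symm hij.symm hik hkjT hkjq
  refine hasFixedPoint_of_generators (q := q) (fun a b hab => ?_) fun a b c hab hac hbc => ?_
  · by_cases hbi : b = i
    · exact partialConj_mem_fixer hα hjk.symm hab (hbi ▸ hik) hkjT hkjq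
    · exact partialConj_mem_fixer hα hij hab hbi hijT hijq
  by_cases hi : i = a ∨ i = b ∨ i = c; swap
  · exact commTransvection_mem_fixer_of_ne hα hij hac hab (by grind) (by grind) (by grind) hijT hijq
  by_cases hj : j = a ∨ j = b ∨ j = c; swap
  · exact commTransvection_mem_fixer_of_ne hα hij.symm hac hab (by grind) (by grind) (by grind)
      hjiT hjiq
  by_cases hk : k = a ∨ k = b ∨ k = c; swap
  · exact commTransvection_mem_fixer_of_ne hα hjk.symm hac hab (by grind) (by grind) (by grind)
      hkjT hkjq
  suffices commTransvection a b c ∈ fixer ρ q ∨ commTransvection a c b ∈ fixer ρ q from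
    this.elim id fun h => by rw [← commTransvection_inv]; exact inv_mem h
  obtain ⟨rfl, rfl | rfl⟩ | ⟨rfl, rfl | rfl⟩ | ⟨rfl, rfl | rfl⟩ :
      (a = i ∧ (j = b ∨ j = c)) ∨ (a = j ∧ (i = b ∨ i = c)) ∨ (a = k ∧ (j = b ∨ j = c)) := by grind
  · exact .inl (commTransvection_mem_fixer hα hac hab hijT hijq)
  · exact .inr (commTransvection_mem_fixer hα hab hac hijT hijq)
  · exact .inl (commTransvection_mem_fixer hα hac hab hjiT hjiq)
  · exact .inr (commTransvection_mem_fixer hα hab hac hjiT hjiq)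
  · exact .inl (commTransvection_mem_fixer hα hac hab hkjT hkjq)
  · exact .inr (commTransvection_mem_fixer hα hab hac hkjT hkjq)

theorem exists_partialConj_notMem (hj : MulAut.conj (of j) ∉ translations ρ) :
    ∃ i ≠ j, partialConj i j ∉ translations ρ := by
  contrapose! hj
  exact conj_of_mem hj

theorem hasFixedPoint_of_forall_conj_notMem (hα : 4 ≤ ENat.card α)
    (hT : ∀ j : α, MulAut.conj (of j) ∉ translations ρ) : HasFixedPoint ρ := by
  choose p hp using fun j => exists_mem_fixer (conj_mem_magnusSubgroup (of j)) (hT j)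
  have hfix {u : MulAut (FreeGroup α)} (hu : u ∈ magnusSubgroup α) (l : α) (hl : u (of l) = of l) :
      u ∈ fixer ρ (p l) := mem_fixer_of_commute (hT l) (hp l) hu (commute_conj hl)
  have hC {i j l : α} (hij : i ≠ j) (hli : l ≠ i) : partialConj i j ∈ fixer ρ (p l) :=
    hfix (partialConj_mem i j) l (by simp [hij, hli])
  have heq {i j : α} (hij : i ≠ j) (hT : partialConj i j ∉ translations ρ) {l m : α}
      (hl : l ≠ i) (hm : m ≠ i) : p l = p m := eq_of_mem_fixer hT (hC hij hl) (hC hij hm)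
  have : Nonempty α := not_isEmpty_iff.1 fun h => by
    simp [(ENat.card_eq_zero_iff_empty α).2 h] at hα
  obtain ⟨i, hij, hi⟩ := exists_partialConj_notMem (hT (Classical.arbitrary α))
  obtain ⟨k, hki, hk⟩ := exists_partialConj_notMem (hT i)
  obtain ⟨c, hic, hkc, -⟩ := exists_ne_ne_ne hα i k k
  have hp_eq (l : α) : p l = p c := by
    rcases eq_or_ne l i with rfl | hli
    · exact heq hki hk hki.symm hkc.symm
    · exact heq hij hi hli hic.symm
  refine hasFixedPoint_of_generators (q := p c) (fun a b hab => ?_) fun a b d hab had _ => ?_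
  · exact hp_eq b ▸ hC hab hab.symm
  · exact hp_eq b ▸ hfix (commTransvection_mem a b d) b (by simp [hab, hab.symm, had])

theorem hasFixedPoint_of_conj_notMem (hα : 4 ≤ ENat.card α)
    (hj : MulAut.conj (of j) ∉ translations ρ) : HasFixedPoint ρ := by
  classical
  have := Fintype.ofFinite α
  obtain ⟨g, hg⟩ := exists_mul_of_mem
    (Finset.univ.filter fun k : α => MulAut.conj (of k) ∈ translations ρ) (by simpa using hj)
  refine HasFixedPoint.of_conjAction (g := g) (hasFixedPoint_of_forall_conj_notMem hα fun k => ?_)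
  rw [mem_translations_conjAction_iff (semiconjBy_conj g (of k)), hg]
  by_cases hk : MulAut.conj (of k) ∈ translations ρ
  · simpa [hk, Subgroup.mul_mem_cancel_left _ hk] using hj
  · simp [hk]

theorem exists_conj_partialConj_notMem (h : ¬ magnusSubgroup α ≤ translations ρ) :
    ∃ g : MulAut (FreeGroup α), ∃ i j, i ≠ j ∧ partialConj i j ∉ translations (conjAction ρ g) := by
  contrapose! h
  have hC (i j : α) (hij : i ≠ j) : partialConj i j ∈ translations ρ :=
    (mem_translations_conjAction_iff (SemiconjBy.one_left _)).1 (h 1 i j hij)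
  refine (Subgroup.closure_le _).2 fun u hu => ?_
  cases hu with
  | partialConj hij => exact hC _ _ hij
  | @commTransvection i k j hik hij _ =>
    rw [commTransvection_eq_commutator hik hij.symm, commutatorElement_def]
    exact mul_mem ((mem_translations_conjAction_iff (mul_inv_eq_iff_eq_mul.1 rfl)).1
      (h _ i j hij)) (inv_mem (hC i j hij))

theorem hasFixedPoint_of_not_le_translations (hα : 4 ≤ ENat.card α)
    (h : ¬ magnusSubgroup α ≤ translations ρ) : HasFixedPoint ρ := by
  obtain ⟨g, i, j, hij, hijT⟩ := exists_conj_partialConj_notMem h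
  refine HasFixedPoint.of_conjAction (g := g) ?_
  by_cases hjT : MulAut.conj (of j) ∈ translations (conjAction ρ g); swap
  · exact hasFixedPoint_of_conj_notMem hα hjT
  obtain ⟨k, hki, hkj, hkjT⟩ :
      ∃ k, k ≠ i ∧ k ≠ j ∧ partialConj k j ∉ translations (conjAction ρ g) := by
    contrapose! hijT
    exact partialConj_mem_of_conj_mem hij hijT hjT
  by_cases hjiT : partialConj j i ∈ translations (conjAction ρ g); swap
  · exact hasFixedPoint_of_partialConj_notMem hα hij hki.symm hkj.symm hijT hjiT hkjT
  refine HasFixedPoint.of_conjAction (g := transvection i j)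
    (hasFixedPoint_of_partialConj_notMem hα hij hki.symm hkj.symm ?_ ?_ ?_)
  · rwa [mem_translations_conjAction_iff (transvection_partialConj_ab hij)]
  · rwa [mem_translations_conjAction_iff (transvection_partialConj_ba hij),
      Subgroup.mul_mem_cancel_right _ hjiT]
  · rwa [mem_translations_conjAction_iff (transvection_partialConj_ij hij hki hkj hij.symm hkj)]

end CommonFixedPoint

section PerfectGroups

variable {G : Type*} [Group G] {S : Set G}

theorem commutatorElement_eq_of_conj_eq {a a' b b' : G} (ha : MulAut.conj a = MulAut.conj a')
    (hb : MulAut.conj b = MulAut.conj b') : ⁅a, b⁆ = ⁅a', b'⁆ :=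
  calc ⁅a, b⁆ = MulAut.conj a b * b⁻¹ := rfl
    _ = a' * MulAut.conj b a'⁻¹ := by
      rw [ha]
      simp only [MulAut.conj_apply, mul_assoc]
    _ = ⁅a', b'⁆ := by
      rw [hb]
      simp only [MulAut.conj_apply, commutatorElement_def, mul_assoc]

theorem finite_commutatorSet_of_closure_eq_top (hfin : S.Finite)
    (hconj : ∀ g, ∀ s ∈ S, g * s * g⁻¹ ∈ S) (htop : Subgroup.closure S = ⊤) :
    Finite (commutatorSet G) := by
  have := hfin.to_subtype
  let action (g : G) (s : S) : S := ⟨g * s * g⁻¹, hconj g s s.2⟩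
  have conj_eq {g g' : G} (h : action g = action g') : MulAut.conj g = MulAut.conj g' := by
    have heqOn : Set.EqOn (MulAut.conj g).toMonoidHom (MulAut.conj g').toMonoidHom S := fun s hs =>
      congrArg Subtype.val (congrFun h ⟨s, hs⟩)
    ext x
    exact DFunLike.congr_fun (MonoidHom.eq_of_eqOn_dense htop heqOn) x
  have hfactor : (fun p : G × G => ⁅p.1, p.2⁆).FactorsThrough
      fun p : G × G => (action p.1, action p.2) := fun p q h =>
    commutatorElement_eq_of_conj_eq (conj_eq (congrArg Prod.fst h)) (conj_eq (congrArg Prod.snd h))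
  refine ((Set.finite_range (Function.extend (fun p : G × G => (action p.1, action p.2))
    (fun p => ⁅p.1, p.2⁆) fun _ => 1)).subset ?_).to_subtype
  rintro _ ⟨a, b, rfl⟩
  exact ⟨_, hfactor.extend_apply _ (a, b)⟩

theorem finite_of_perfect_of_closure_eq_top (hperfect : commutator G = ⊤) (hfin : S.Finite)
    (hconj : ∀ g, ∀ s ∈ S, g * s * g⁻¹ ∈ S) (htop : Subgroup.closure S = ⊤) : Finite G := by
  have := finite_commutatorSet_of_closure_eq_top hfin hconj htop
  have hfinite : Finite (commutator G) := inferInstance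
  rw [hperfect] at hfinite
  exact Finite.of_equiv _ Subgroup.topEquiv.toEquiv

end PerfectGroups

section SteinbergFamilies

variable {ι A B G : Type*} [Group G]

/-- A family `x i j a` in a group satisfying the Steinberg relations, which hold for the elementary
matrices `1 + a Eᵢⱼ`. For `i = j` the value is `1` by convention. -/
structure IsSteinbergFamily [Ring A] (x : ι → ι → A → G) : Prop where
  diag (i : ι) (a : A) : x i i a = 1
  map_add (i j : ι) (a b : A) : x i j (a + b) = x i j a * x i j b
  commutator_eq {i j k : ι} (hij : i ≠ j) (hjk : j ≠ k) (hik : i ≠ k) (a b : A) :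
    ⁅x i j a, x j k b⁆ = x i k (a * b)
  commute {i j k l : ι} (hjk : j ≠ k) (hil : i ≠ l) (a b : A) : Commute (x i j a) (x k l b)

/-- All the elements of a Steinberg family. -/
def rootElements (x : ι → ι → A → G) : Set G := {g | ∃ i j a, x i j a = g}

namespace IsSteinbergFamily

section Ring

variable [Ring A] [Ring B] {x : ι → ι → A → G} {i j k l : ι}

theorem map_zero (h : IsSteinbergFamily x) (i j : ι) : x i j 0 = 1 := by
  simpa using h.map_add i j 0 0

theorem map_neg (h : IsSteinbergFamily x) (i j : ι) (a : A) : x i j (-a) = (x i j a)⁻¹ := by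
  rw [eq_inv_iff_mul_eq_one, ← h.map_add, neg_add_cancel, h.map_zero]

/-- The homomorphism `a ↦ x i j a` onto a root subgroup. -/
def rootHom (h : IsSteinbergFamily x) (i j : ι) : Multiplicative A →* G where
  toFun a := x i j a.toAdd
  map_one' := h.map_zero i j
  map_mul' a b := h.map_add i j a.toAdd b.toAdd

theorem semiconjBy_left (h : IsSteinbergFamily x) (hij : i ≠ j) (hjk : j ≠ k) (hik : i ≠ k)
    (a b : A) : SemiconjBy (x i j a) (x j k b) (x i k (a * b) * x j k b) := by
  rw [← h.commutator_eq hij hjk hik, SemiconjBy, commutatorElement_def]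
  group

theorem commute_of_mul_eq_zero (h : IsSteinbergFamily x) {a b : A} (hab : a * b = 0)
    (hba : b * a = 0) (hroots : i ≠ l ∨ j ≠ k) : Commute (x i j a) (x k l b) := by
  by_cases hij : i = j
  · rw [hij, h.diag]
    exact Commute.one_left _
  by_cases hkl : k = l
  · rw [hkl, h.diag]
    exact Commute.one_right _
  rcases eq_or_ne j k with rfl | hjk
  · rw [← commutatorElement_eq_one_iff_commute,
      h.commutator_eq hij hkl (hroots.resolve_right (not_not.2 rfl)), hab, h.map_zero]
  rcases eq_or_ne i l with rfl | hil
  · refine Commute.symm ?_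
    rw [← commutatorElement_eq_one_iff_commute, h.commutator_eq hkl hij hjk.symm, hba, h.map_zero]
  · exact h.commute hjk hil a b

theorem commute_of_orthogonal (h : IsSteinbergFamily x) (hι : 3 ≤ ENat.card ι) {a b e : A}
    (hab : a * b = 0) (hba : b * a = 0) (hae : a * e = 0) (hea : e * a = 0) (hbe : b * e = b) :
    Commute (x i j a) (x k l b) := by
  by_cases hroots : i ≠ l ∨ j ≠ k
  · exact h.commute_of_mul_eq_zero hab hba hroots
  obtain ⟨rfl, rfl⟩ : i = l ∧ j = k := by simpa [not_or] using hroots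
  by_cases hij : i = j
  · rw [hij, h.diag]
    exact Commute.one_left _
  obtain ⟨m, hmi, hmj⟩ := ENat.exists_ne_ne_of_three_le hι i j
  have hjm : Commute (x i j a) (x j m b) := h.commute_of_mul_eq_zero hab hba (Or.inl hmi.symm)
  have hmi' : Commute (x i j a) (x m i e) := h.commute_of_mul_eq_zero hae hea (Or.inr hmj.symm)
  rw [← hbe, ← h.commutator_eq hmj.symm hmi (Ne.symm hij), commutatorElement_def]
  exact ((hjm.mul_right hmi').mul_right hjm.inv_right).mul_right hmi'.inv_right

theorem comp (h : IsSteinbergFamily x) (f : B →ₙ+* A) :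
    IsSteinbergFamily fun i j b => x i j (f b) where
  diag i _ := h.diag i _
  map_add i j a b := by rw [_root_.map_add, h.map_add]
  commutator_eq hij hjk hik a b := by rw [map_mul, h.commutator_eq hij hjk hik]
  commute hjk hil _ _ := h.commute hjk hil _ _

theorem commutator_eq_top (h : IsSteinbergFamily x) (hι : 3 ≤ ENat.card ι)
    (htop : Subgroup.closure (rootElements x) = ⊤) :
    commutator G = ⊤ := by
  rw [eq_top_iff, ← htop, Subgroup.closure_le]
  rintro _ ⟨i, j, a, rfl⟩
  by_cases hij : i = j
  · rw [hij, h.diag]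
    exact one_mem _
  obtain ⟨m, hmi, hmj⟩ := ENat.exists_ne_ne_of_three_le hι i j
  have hroot : x i j a = ⁅x i m a, x m j 1⁆ := by rw [h.commutator_eq hmi.symm hmj hij, mul_one]
  rw [SetLike.mem_coe, hroot]
  exact Subgroup.commutator_mem_commutator (Subgroup.mem_top _) (Subgroup.mem_top _)

end Ring

end IsSteinbergFamily

end SteinbergFamilies

section SteinbergCells

variable {ι A G : Type*} [Group G]

/-- The subgroup generated by the root elements `x j i a` of the `i`-th column. -/
def columnSubgroup (x : ι → ι → A → G) (i : ι) : Subgroup G :=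
  Subgroup.closure (Set.range fun p : ι × A => x p.1 i p.2)

/-- The subgroup generated by the root elements `x i j a` of the `i`-th row. -/
def rowSubgroup (x : ι → ι → A → G) (i : ι) : Subgroup G :=
  Subgroup.closure (Set.range fun p : ι × A => x i p.1 p.2)

/-- The conjugates of the `i`-th row subgroup by the `i`-th column subgroup, which model the
transvections `1 + u φ` such that the vector `u` has `i`-th coordinate `1`. -/
def cell (x : ι → ι → A → G) (i : ι) : Set G :=
  {w | ∃ v ∈ columnSubgroup x i, ∃ u ∈ rowSubgroup x i, v * u * v⁻¹ = w}

/-- The family modelled on the inverse transpose; it exchanges rows and columns. -/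
def contragredient [Neg A] (x : ι → ι → A → G) (i j : ι) (a : A) : G := x j i (-a)

/-- The element acting on the `i`-th row as the diagonal matrix with entry `1 + a b` at `i`, where
`v` is the inverse of `1 + a b`. It is chosen so that `x i l a * x l i b` has the Gauss
decomposition `x l i (b * v) * diagonal x i l a b v * x i l (a * v)`. -/
def diagonal [CommRing A] (x : ι → ι → A → G) (i l : ι) (a b v : A) : G :=
  x l i (-(b * v)) * x i l a * x l i b * x i l (-(a * v))

/-- The element acting as the monomial matrix with entries `b` at `(l, i)` and `-c` at `(i, l)`,
where `c` is the inverse of `b`. -/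
def weyl [CommRing A] (x : ι → ι → A → G) (i l : ι) (b c : A) : G :=
  x i l (-c) * x l i b * x i l (-c)

theorem mem_columnSubgroup (x : ι → ι → A → G) (j i : ι) (a : A) : x j i a ∈ columnSubgroup x i :=
  Subgroup.subset_closure ⟨(j, a), rfl⟩

theorem mem_rowSubgroup (x : ι → ι → A → G) (i j : ι) (a : A) : x i j a ∈ rowSubgroup x i :=
  Subgroup.subset_closure ⟨(j, a), rfl⟩

theorem columnSubgroup_contragredient [InvolutiveNeg A] (x : ι → ι → A → G) (i : ι) :
    columnSubgroup (contragredient x) i = rowSubgroup x i :=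
  congrArg Subgroup.closure
    ((Equiv.prodCongr (Equiv.refl ι) (Equiv.neg A)).surjective.range_comp
      fun p : ι × A => x i p.1 p.2)

theorem conj_mem_of_mem_closure {S : Set G} {K : Subgroup G} {g u : G}
    (hS : ∀ s ∈ S, g * s * g⁻¹ ∈ K) (hu : u ∈ Subgroup.closure S) : g * u * g⁻¹ ∈ K :=
  (Subgroup.closure_le (K.comap (MulAut.conj g).toMonoidHom)).2 hS hu

namespace IsSteinbergFamily

variable [CommRing A] {x : ι → ι → A → G} {i j k l m : ι}

theorem contragredient (h : IsSteinbergFamily x) : IsSteinbergFamily (contragredient x) where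
  diag i _ := h.diag i _
  map_add i j a b := by rw [FreeGroupAut.contragredient, neg_add, h.map_add]; rfl
  commutator_eq {i j k} hij hjk hik a b := by
    simp only [FreeGroupAut.contragredient]
    rw [← commutatorElement_inv, h.commutator_eq hjk.symm hij.symm hik.symm, neg_mul_neg,
      h.map_neg, mul_comm]
  commute hjk hil a b := h.commute hil hjk (-a) (-b)

theorem semiconjBy_right (h : IsSteinbergFamily x) (hij : i ≠ j) (hjk : j ≠ k) (hik : i ≠ k)
    (a b : A) : SemiconjBy (x j k b) (x i j a) (x i k (-(a * b)) * x i j a) := by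
  simpa [FreeGroupAut.contragredient, mul_comm b a] using
    h.contragredient.semiconjBy_left hjk.symm hij.symm hik.symm (-b) (-a)

theorem diagonal_row (h : IsSteinbergFamily x) (hil : i ≠ l) (hki : k ≠ i) (hkl : k ≠ l)
    {a b v : A} (hv : (1 + a * b) * v = 1) (s : A) :
    SemiconjBy (diagonal x i l a b v) (x i k s) (x i k ((1 + a * b) * s)) := by
  have hright : SemiconjBy (x i l (-(a * v))) (x i k s) (x i k s) :=
    h.commute hil.symm hki.symm _ _
  have hlower : SemiconjBy (x l i b) (x i k s) (x l k (b * s) * x i k s) :=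
    h.semiconjBy_left hil.symm hki.symm hkl.symm b s
  have hupper : SemiconjBy (x i l a) (x l k (b * s) * x i k s)
      (x l k (b * s) * x i k ((1 + a * b) * s)) := by
    have hprod := (h.semiconjBy_left hil hkl.symm hki.symm a (b * s)).mul_right
      (h.commute hil.symm hki.symm a s)
    have hcomm : Commute (x i k (a * (b * s))) (x l k (b * s)) := h.commute hkl hki.symm _ _
    have hsum : a * (b * s) + s = (1 + a * b) * s := by ring
    rwa [hcomm.eq, mul_assoc, ← h.map_add, hsum] at hprod
  have hleft : SemiconjBy (x l i (-(b * v))) (x l k (b * s) * x i k ((1 + a * b) * s))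
      (x i k ((1 + a * b) * s)) := by
    have hprod := SemiconjBy.mul_right (h.commute hil hkl.symm (-(b * v)) (b * s))
      (h.semiconjBy_left hil.symm hki.symm hkl.symm (-(b * v)) ((1 + a * b) * s))
    have hcancel : b * s + -(b * v) * ((1 + a * b) * s) = 0 := by linear_combination -(b * s) * hv
    rwa [← mul_assoc, ← h.map_add, hcancel, h.map_zero, one_mul] at hprod
  exact ((hleft.mul_left hupper).mul_left hlower).mul_left hright

theorem diagonal_column (h : IsSteinbergFamily x) (hil : i ≠ l) (hki : k ≠ i) (hkl : k ≠ l)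
    {a b v : A} (hv : (1 + a * b) * v = 1) (s : A) :
    SemiconjBy (diagonal x i l a b v) (x k l s) (x k l ((1 + a * b) * s)) := by
  have hrow := h.contragredient.diagonal_row hil.symm hkl hki (a := -a) (b := -b) (v := v)
    (by rwa [neg_mul_neg]) (-s)
  simpa [diagonal, FreeGroupAut.contragredient] using hrow

theorem weyl_row (h : IsSteinbergFamily x) (hil : i ≠ l) (hki : k ≠ i) (hkl : k ≠ l) {b c : A}
    (hc : b * c = 1) (s : A) : SemiconjBy (weyl x i l b c) (x i k s) (x l k (b * s)) := by
  have hright : SemiconjBy (x i l (-c)) (x i k s) (x i k s) := h.commute hil.symm hki.symm _ _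
  have hlower : SemiconjBy (x l i b) (x i k s) (x l k (b * s) * x i k s) :=
    h.semiconjBy_left hil.symm hki.symm hkl.symm b s
  have hleft : SemiconjBy (x i l (-c)) (x l k (b * s) * x i k s) (x l k (b * s)) := by
    have hprod := (h.semiconjBy_left hil hkl.symm hki.symm (-c) (b * s)).mul_right
      (h.commute hil.symm hki.symm (-c) s)
    have hcomm : Commute (x i k (-c * (b * s))) (x l k (b * s)) := h.commute hkl hki.symm _ _
    have hcancel : -c * (b * s) + s = 0 := by linear_combination -s * hc
    rwa [hcomm.eq, mul_assoc, ← h.map_add, hcancel, h.map_zero, mul_one] at hprod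
  exact (hleft.mul_left hlower).mul_left hright

theorem weyl_column (h : IsSteinbergFamily x) (hil : i ≠ l) (hki : k ≠ i) (hkl : k ≠ l) {b c : A}
    (hc : b * c = 1) (s : A) : SemiconjBy (weyl x i l b c) (x k l s) (x k i (-(b * s))) := by
  have hrow := h.contragredient.weyl_row hil.symm hkl hki (b := -b) (c := -c)
    (by rwa [neg_mul_neg]) (-s)
  simpa [weyl, FreeGroupAut.contragredient] using hrow

end IsSteinbergFamily

end SteinbergCells

section SteinbergFiniteness

variable {ι A G : Type*} [Group G]

theorem rootElements_subset_iUnion_cell (x : ι → ι → A → G) :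
    rootElements x ⊆ ⋃ i, cell x i := by
  rintro _ ⟨i, j, a, rfl⟩
  exact Set.mem_iUnion_of_mem i
    ⟨1, one_mem _, _, mem_rowSubgroup x i j a, by rw [one_mul, inv_one, mul_one]⟩

namespace IsSteinbergFamily

variable [CommRing A] {x : ι → ι → A → G} {i j k l m : ι}

theorem mem_normalizer (h : IsSteinbergFamily x) {S : Set G}
    (hS : ∀ a, ∀ w ∈ S, x k l a * w * (x k l a)⁻¹ ∈ S) (a : A) :
    x k l a ∈ Subgroup.normalizer S := fun w =>
  ⟨hS a w, fun hw => by simpa [h.map_neg, mul_assoc] using hS (-a) _ hw⟩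

theorem mem_normalizer_columnSubgroup (h : IsSteinbergFamily x) (hki : k ≠ i) (a : A) :
    x k l a ∈ Subgroup.normalizer (columnSubgroup x i : Set G) := by
  refine h.mem_normalizer (fun a w hw => conj_mem_of_mem_closure ?_ hw) a
  rintro _ ⟨⟨j, b⟩, rfl⟩
  dsimp only
  by_cases hkl : k = l
  · rw [hkl, h.diag, one_mul, inv_one, mul_one]
    exact mem_columnSubgroup x j i b
  rcases eq_or_ne l j with rfl | hlj
  · rcases eq_or_ne l i with rfl | hli
    · rw [h.diag, mul_one, mul_inv_cancel]
      exact one_mem _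
    · rw [mul_inv_eq_of_eq_mul (h.semiconjBy_left hkl hli hki a b)]
      exact mul_mem (mem_columnSubgroup x k i _) (mem_columnSubgroup x l i b)
  · rw [mul_inv_eq_of_eq_mul (h.commute hlj hki a b)]
    exact mem_columnSubgroup x j i b

theorem mem_normalizer_rowSubgroup (h : IsSteinbergFamily x) (hli : l ≠ i) (a : A) :
    x k l a ∈ Subgroup.normalizer (rowSubgroup x i : Set G) := by
  rw [← columnSubgroup_contragredient]
  simpa [FreeGroupAut.contragredient] using
    h.contragredient.mem_normalizer_columnSubgroup (l := k) hli (-a)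

theorem mem_normalizer_cell (h : IsSteinbergFamily x) (hki : k ≠ i) (a : A) :
    x k l a ∈ Subgroup.normalizer (cell x i) := by
  refine h.mem_normalizer ?_ a
  rintro a _ ⟨v, hv, u, hu, rfl⟩
  rcases eq_or_ne l i with rfl | hli
  · refine ⟨x k l a * v, mul_mem (mem_columnSubgroup x k l a) hv, u, hu, ?_⟩
    group
  · refine ⟨x k l a * v * (x k l a)⁻¹, (h.mem_normalizer_columnSubgroup hki a v).1 hv,
      x k l a * u * (x k l a)⁻¹, (h.mem_normalizer_rowSubgroup hli a u).1 hu, ?_⟩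
    group

theorem commute_columnSubgroup (h : IsSteinbergFamily x) (a : A) {v : G}
    (hv : v ∈ columnSubgroup x i) : Commute (x j i a) v := by
  induction hv using Subgroup.closure_induction with
  | mem v hv =>
    obtain ⟨⟨k, b⟩, rfl⟩ := hv
    dsimp only
    rcases eq_or_ne i k with rfl | hik
    · rw [h.diag]
      exact Commute.one_right _
    rcases eq_or_ne j i with rfl | hji
    · rw [h.diag]
      exact Commute.one_left _
    · exact h.commute hik hji a b
  | one => exact Commute.one_right _
  | mul _ _ _ _ hv hw => exact hv.mul_right hw
  | inv _ _ hv => exact hv.inv_right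

theorem commute_rowSubgroup (h : IsSteinbergFamily x) (a : A) {u : G}
    (hu : u ∈ rowSubgroup x i) : Commute (x i j a) u := by
  rw [← columnSubgroup_contragredient] at hu
  simpa [FreeGroupAut.contragredient] using
    h.contragredient.commute_columnSubgroup (j := j) (-a) hu

theorem exists_eq_mul_of_mem_columnSubgroup (h : IsSteinbergFamily x) {S : Subgroup G}
    (hS : ∀ j ≠ k, j ≠ l → ∀ a, x j k a ∈ S) {v : G} (hv : v ∈ columnSubgroup x k) :
    ∃ q ∈ S, ∃ b, v = q * x l k b := by
  have mul_root (v : G) (hv : ∃ q ∈ S, ∃ b, v = q * x l k b) (j : ι) (c : A) :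
      ∃ q ∈ S, ∃ b, v * x j k c = q * x l k b := by
    obtain ⟨q, hq, b, rfl⟩ := hv
    rcases eq_or_ne j l with rfl | hjl
    · exact ⟨q, hq, b + c, by rw [h.map_add, mul_assoc]⟩
    rcases eq_or_ne j k with rfl | hjk
    · exact ⟨q, hq, b, by rw [h.diag, mul_one]⟩
    · refine ⟨q * x j k c, mul_mem hq (hS j hjk hjl c), b, ?_⟩
      rw [mul_assoc, mul_assoc, (h.commute_columnSubgroup c (mem_columnSubgroup x l k b)).eq]
  induction hv using Subgroup.closure_induction_right with
  | one => exact ⟨1, one_mem _, 0, by rw [h.map_zero, mul_one]⟩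
  | mul_right v _ _ hy hv =>
    obtain ⟨⟨j, c⟩, rfl⟩ := hy
    exact mul_root v hv j c
  | mul_inv_cancel v _ _ hy hv =>
    obtain ⟨⟨j, c⟩, rfl⟩ := hy
    simpa only [h.map_neg] using mul_root v hv j (-c)

theorem conj_mem_rowSubgroup (h : IsSteinbergFamily x) {g u : G} {i' l' : ι} (hmi : m ≠ i)
    (hml : m ≠ l) (hil : i ≠ l) (hmi' : m ≠ i') (hml' : m ≠ l') (hil' : i' ≠ l')
    (hrow : ∀ k ≠ i, k ≠ l → ∀ s, ∃ t, SemiconjBy g (x i k s) (x i' k t))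
    (hcolumn : ∃ t, SemiconjBy g (x m l 1) (x m l' t)) (hu : u ∈ rowSubgroup x i) :
    g * u * g⁻¹ ∈ rowSubgroup x i' := by
  refine conj_mem_of_mem_closure ?_ hu
  rintro _ ⟨⟨k, s⟩, rfl⟩
  dsimp only
  rcases eq_or_ne k i with rfl | hki
  · rw [h.diag, mul_one, mul_inv_cancel]
    exact one_mem _
  rcases eq_or_ne k l with rfl | hkl
  · obtain ⟨t, ht⟩ := hcolumn
    obtain ⟨r, hr⟩ := hrow m hmi hml s
    have hcomm : SemiconjBy g ⁅x i m s, x m k 1⁆ ⁅x i' m r, x m l' t⁆ :=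
      ((hr.mul_right ht).mul_right hr.inv_right).mul_right ht.inv_right
    rw [h.commutator_eq hmi.symm hml hil, h.commutator_eq hmi'.symm hml' hil', mul_one] at hcomm
    exact mul_inv_eq_of_eq_mul hcomm ▸ mem_rowSubgroup x i' l' _
  · obtain ⟨t, ht⟩ := hrow k hki hkl s
    exact mul_inv_eq_of_eq_mul ht ▸ mem_rowSubgroup x i' k t

theorem conj_mul_mem_cell_of_isUnit_one_add (h : IsSteinbergFamily x) (hι : 3 ≤ ENat.card ι)
    (hil : i ≠ l) {a b : A} (hab : IsUnit (1 + a * b)) {u : G} (hu : u ∈ rowSubgroup x i) :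
    x i l a * x l i b * u * (x i l a * x l i b)⁻¹ ∈ cell x i := by
  obtain ⟨m, hmi, hml⟩ := ENat.exists_ne_ne_of_three_le hι i l
  obtain ⟨v, hv⟩ := hab.exists_right_inv
  have hgauss : x i l a * x l i b =
      x l i (b * v) * diagonal x i l a b v * x i l (a * v) := by
    rw [diagonal, h.map_neg, h.map_neg]
    group
  refine ⟨_, mem_columnSubgroup x l i (b * v), _, h.conj_mem_rowSubgroup hmi hml hil hmi hml hil
    (fun k hki hkl s => ⟨_, h.diagonal_row hil hki hkl hv s⟩)
    ⟨_, h.diagonal_column hil hmi hml hv 1⟩ hu, ?_⟩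
  rw [hgauss, mul_assoc (x l i (b * v) * diagonal x i l a b v),
    (h.commute_rowSubgroup (j := l) (a * v) hu).eq]
  group

theorem conj_mul_mem_cell_of_isUnit (h : IsSteinbergFamily x) (hι : 3 ≤ ENat.card ι)
    (hil : i ≠ l) (a : A) {b : A} (hb : IsUnit b) {u : G} (hu : u ∈ rowSubgroup x i) :
    x i l a * x l i b * u * (x i l a * x l i b)⁻¹ ∈ cell x l := by
  obtain ⟨m, hmi, hml⟩ := ENat.exists_ne_ne_of_three_le hι i l
  obtain ⟨c, hc⟩ := hb.exists_right_inv
  have hbruhat : x i l a * x l i b = x i l (a + c) * weyl x i l b c * x i l c := by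
    rw [weyl, h.map_add, h.map_neg]
    group
  refine ⟨_, mem_columnSubgroup x i l (a + c), _,
    h.conj_mem_rowSubgroup hmi hml hil hml hmi hil.symm
      (fun k hki hkl s => ⟨_, h.weyl_row hil hki hkl hc s⟩)
      ⟨_, h.weyl_column hil hmi hml hc 1⟩ hu, ?_⟩
  rw [hbruhat, mul_assoc (x i l (a + c) * weyl x i l b c),
    (h.commute_rowSubgroup (j := l) c hu).eq]
  group

/-- Over a local ring some coordinate of a unimodular vector is a unit, so the cells exhaust the
transvections. -/
theorem conj_mem_iUnion_cell (h : IsSteinbergFamily x) (hι : 3 ≤ ENat.card ι)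
    (hA : ∀ a : A, IsUnit a ∨ IsUnit (1 + a)) (a : A) {w : G} (hw : w ∈ ⋃ i, cell x i) :
    x k l a * w * (x k l a)⁻¹ ∈ ⋃ i, cell x i := by
  obtain ⟨i, hw⟩ := Set.mem_iUnion.1 hw
  rcases ne_or_eq k i with hki | rfl
  · exact Set.mem_iUnion_of_mem i ((h.mem_normalizer_cell hki a w).1 hw)
  rcases eq_or_ne k l with rfl | hkl
  · exact Set.mem_iUnion_of_mem k (by rwa [h.diag, one_mul, inv_one, mul_one])
  obtain ⟨v, hv, u, hu, rfl⟩ := hw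
  let N : Subgroup G := Subgroup.normalizer (cell x k) ⊓ Subgroup.normalizer (cell x l)
  have root_mem {j m : ι} (hjk : j ≠ k) (hjl : j ≠ l) (c : A) : x j m c ∈ N :=
    ⟨h.mem_normalizer_cell hjk c, h.mem_normalizer_cell hjl c⟩
  obtain ⟨q, hq, b, rfl⟩ := h.exists_eq_mul_of_mem_columnSubgroup
    (S := N.comap (MulAut.conj (x k l a)).toMonoidHom) (l := l) (fun j hjk hjl c => by
      change x k l a * x j k c * (x k l a)⁻¹ ∈ N
      rw [mul_inv_eq_of_eq_mul (h.semiconjBy_right hjk hkl hjl c a)]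
      exact mul_mem (root_mem hjk hjl _) (root_mem hjk hjl c)) hv
  have hconj : x k l a * (q * x l k b * u * (q * x l k b)⁻¹) * (x k l a)⁻¹ =
      MulAut.conj (x k l a) q * (x k l a * x l k b * u * (x k l a * x l k b)⁻¹) *
        (MulAut.conj (x k l a) q)⁻¹ := by
    rw [MulAut.conj_apply]
    group
  rw [hconj]
  rcases hA (a * b) with hab | hab
  · exact Set.mem_iUnion_of_mem l ((hq.2 _).1
      (h.conj_mul_mem_cell_of_isUnit hι hkl a (isUnit_of_mul_isUnit_right hab) hu))
  · exact Set.mem_iUnion_of_mem k ((hq.1 _).1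
      (h.conj_mul_mem_cell_of_isUnit_one_add hι hkl hab hu))

theorem finite_columnSubgroup [Finite ι] [Finite A] (h : IsSteinbergFamily x) (i : ι) :
    Finite (columnSubgroup x i) := by
  have := Fintype.ofFinite ι
  have hcomm : Pairwise fun j k => ∀ a b : Multiplicative A,
      Commute (h.rootHom j i a) (h.rootHom k i b) := fun j k _ a b =>
    h.commute_columnSubgroup a.toAdd (mem_columnSubgroup x k i b.toAdd)
  have hle : columnSubgroup x i ≤ (MonoidHom.noncommPiCoprod _ hcomm).range := by
    rw [MonoidHom.noncommPiCoprod_range, columnSubgroup, Subgroup.closure_le]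
    rintro _ ⟨⟨j, a⟩, rfl⟩
    exact Subgroup.mem_iSup_of_mem j ⟨Multiplicative.ofAdd a, rfl⟩
  exact ((Set.finite_range (MonoidHom.noncommPiCoprod _ hcomm)).subset hle).to_subtype

theorem finite_rowSubgroup [Finite ι] [Finite A] (h : IsSteinbergFamily x) (i : ι) :
    Finite (rowSubgroup x i) :=
  columnSubgroup_contragredient x i ▸ h.contragredient.finite_columnSubgroup i

theorem finite_iUnion_cell [Finite ι] [Finite A] (h : IsSteinbergFamily x) :
    (⋃ i, cell x i).Finite := by
  refine Set.finite_iUnion fun i => ?_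
  have := h.finite_columnSubgroup i
  have := h.finite_rowSubgroup i
  refine (Set.finite_range fun p : columnSubgroup x i × rowSubgroup x i =>
    (p.1 * p.2 * (p.1 : G)⁻¹ : G)).subset ?_
  rintro _ ⟨v, hv, u, hu, rfl⟩
  exact ⟨(⟨v, hv⟩, ⟨u, hu⟩), rfl⟩

theorem finite_of_closure_eq_top [Finite ι] [Finite A] (h : IsSteinbergFamily x)
    (hι : 3 ≤ ENat.card ι) (hA : ∀ a : A, IsUnit a ∨ IsUnit (1 + a))
    (htop : Subgroup.closure (rootElements x) = ⊤) : Finite G := by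
  have hnormalizer : Subgroup.normalizer (⋃ i, cell x i) = ⊤ := by
    rw [eq_top_iff, ← htop, Subgroup.closure_le]
    rintro _ ⟨k, l, a, rfl⟩
    exact h.mem_normalizer (fun a w hw => h.conj_mem_iUnion_cell hι hA a hw) a
  have hconj (g : G) : ∀ w ∈ ⋃ i, cell x i, g * w * g⁻¹ ∈ ⋃ i, cell x i := fun w =>
    ((hnormalizer.symm ▸ Subgroup.mem_top g : g ∈ Subgroup.normalizer _) w).1
  exact finite_of_perfect_of_closure_eq_top (h.commutator_eq_top hι htop) h.finite_iUnion_cell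
    hconj (top_unique (htop.ge.trans (Subgroup.closure_mono (rootElements_subset_iUnion_cell x))))

end IsSteinbergFamily

end SteinbergFiniteness

section SteinbergGroups

variable {ι A B G : Type*} [Group G] [Ring A] [Ring B]

/-- The Steinberg relations among the formal generators `(i, j, a)`. -/
inductive SteinbergRelation (ι A : Type*) [Ring A] : FreeGroup (ι × ι × A) → Prop
  | diag (i : ι) (a : A) : SteinbergRelation ι A (of (i, i, a))
  | add (i j : ι) (a b : A) : SteinbergRelation ι A
      (of (i, j, a + b) * (of (i, j, a) * of (i, j, b))⁻¹)
  | commutator {i j k : ι} (hij : i ≠ j) (hjk : j ≠ k) (hik : i ≠ k) (a b : A) :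
      SteinbergRelation ι A (⁅of (i, j, a), of (j, k, b)⁆ * (of (i, k, a * b))⁻¹)
  | commute {i j k l : ι} (hjk : j ≠ k) (hil : i ≠ l) (a b : A) :
      SteinbergRelation ι A ⁅of (i, j, a), of (k, l, b)⁆

/-- The Steinberg group of a ring, with rows and columns indexed by `ι`. -/
abbrev SteinbergGroup (ι A : Type*) [Ring A] : Type _ :=
  PresentedGroup {r | SteinbergRelation ι A r}

namespace SteinbergGroup

/-- The generators of the Steinberg group. -/
def root (i j : ι) (a : A) : SteinbergGroup ι A := PresentedGroup.of (i, j, a)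

theorem isSteinbergFamily_root : IsSteinbergFamily (root : ι → ι → A → SteinbergGroup ι A) where
  diag i a := PresentedGroup.one_of_mem (.diag i a)
  map_add i j a b := mul_inv_eq_one.1 (PresentedGroup.one_of_mem (.add i j a b))
  commutator_eq hij hjk hik a b :=
    mul_inv_eq_one.1 (PresentedGroup.one_of_mem (.commutator hij hjk hik a b))
  commute hjk hil a b :=
    commutatorElement_eq_one_iff_commute.1 (PresentedGroup.one_of_mem (.commute hjk hil a b))

theorem closure_rootElements_root :
    Subgroup.closure (rootElements (root : ι → ι → A → SteinbergGroup ι A)) = ⊤ := by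
  rw [← PresentedGroup.closure_range_of]
  congr 1
  ext g
  simp [rootElements, root]

/-- The homomorphism from the Steinberg group determined by a Steinberg family. -/
def lift {x : ι → ι → A → G} (h : IsSteinbergFamily x) : SteinbergGroup ι A →* G :=
  PresentedGroup.toGroup (f := fun p : ι × ι × A => x p.1 p.2.1 p.2.2) (by
    rintro _ (⟨i, a⟩ | ⟨i, j, a, b⟩ | ⟨hij, hjk, hik, a, b⟩ | ⟨hjk, hil, a, b⟩)
    · simpa using h.diag i a
    · simp [h.map_add]
    · simp [h.commutator_eq hij hjk hik]
    · simpa [commutatorElement_eq_one_iff_commute] using h.commute hjk hil a b)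

@[simp]
theorem lift_root {x : ι → ι → A → G} (h : IsSteinbergFamily x) (i j : ι) (a : A) :
    lift h (root i j a) = x i j a :=
  PresentedGroup.toGroup.of _

theorem range_lift {x : ι → ι → A → G} (h : IsSteinbergFamily x) :
    (lift h).range = Subgroup.closure (rootElements x) := by
  rw [MonoidHom.range_eq_map, ← closure_rootElements_root, MonoidHom.map_closure]
  congr 1
  ext g
  simp [rootElements]

end SteinbergGroup

open SteinbergGroup

theorem IsSteinbergFamily.finite_closure [Finite (SteinbergGroup ι A)] {x : ι → ι → A → G}
    (h : IsSteinbergFamily x) : Finite (Subgroup.closure (rootElements x)) := by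
  rw [← range_lift h]
  exact (Set.finite_range (lift h)).to_subtype

theorem IsSteinbergFamily.finite_closure_comp [Finite (SteinbergGroup ι B)] {x : ι → ι → A → G}
    (h : IsSteinbergFamily x) {f : B →ₙ+* A} (hf : Function.Surjective f) :
    Finite (Subgroup.closure (rootElements x)) := by
  have hroots : rootElements (fun i j b => x i j (f b)) = rootElements x := by
    ext g
    simp only [rootElements, Set.mem_ofPred_eq]
    exact exists₂_congr fun i j => (hf.exists (p := fun a => x i j a = g)).symm
  exact hroots ▸ (h.comp f).finite_closure

theorem finite_steinbergGroup_iff_closure :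
    Finite (SteinbergGroup ι A) ↔
      Finite (Subgroup.closure (rootElements (root : ι → ι → A → SteinbergGroup ι A))) := by
  rw [closure_rootElements_root]
  exact Subgroup.topEquiv.toEquiv.finite_iff.symm

theorem finite_steinbergGroup_of_surjective [Finite (SteinbergGroup ι B)] {f : B →ₙ+* A}
    (hf : Function.Surjective f) : Finite (SteinbergGroup ι A) :=
  finite_steinbergGroup_iff_closure.2 (isSteinbergFamily_root.finite_closure_comp hf)

theorem finite_steinbergGroup_prod (hι : 3 ≤ ENat.card ι) [Finite (SteinbergGroup ι A)]
    [Finite (SteinbergGroup ι B)] : Finite (SteinbergGroup ι (A × B)) := by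
  have hroot := isSteinbergFamily_root (ι := ι) (A := A × B)
  have hfst := hroot.comp ((NonUnitalRingHom.id A).prod 0)
  have hsnd := hroot.comp (NonUnitalRingHom.prod 0 (NonUnitalRingHom.id B))
  have hcomm (u : SteinbergGroup ι A) (v : SteinbergGroup ι B) :
      Commute (lift hfst u) (lift hsnd v) := by
    have hle : (lift hfst).range ≤ Subgroup.centralizer (lift hsnd).range := by
      rw [range_lift, range_lift, Subgroup.centralizer_closure, Subgroup.closure_le]
      rintro _ ⟨i, j, a, rfl⟩ _ ⟨k, l, b, rfl⟩
      exact (hroot.commute_of_orthogonal hι (e := (0, 1))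
        (by simp) (by simp) (by simp) (by simp) (by simp)).symm
    exact (hle ⟨u, rfl⟩ _ ⟨v, rfl⟩).symm
  have htop : (MonoidHom.noncommCoprod _ _ hcomm).range = ⊤ := by
    rw [eq_top_iff, ← closure_rootElements_root, Subgroup.closure_le]
    rintro _ ⟨i, j, ⟨a, b⟩, rfl⟩
    refine ⟨(root i j a, root i j b), ?_⟩
    rw [MonoidHom.noncommCoprod_apply, lift_root, lift_root]
    simp [← hroot.map_add]
  exact Finite.of_surjective _ (MonoidHom.range_eq_top.1 htop)

end SteinbergGroups

section ZModSteinbergGroups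

variable {ι : Type*}

theorem isUnit_or_isUnit_one_add_zmod_prime_pow {p k : ℕ} (hp : p.Prime) (hk : 0 < k)
    (a : ZMod (p ^ k)) : IsUnit a ∨ IsUnit (1 + a) := by
  have : NeZero (p ^ k) := ⟨pow_ne_zero k hp.ne_zero⟩
  obtain ⟨m, rfl⟩ : ∃ m : ℕ, (m : ZMod (p ^ k)) = a := ⟨a.val, ZMod.natCast_zmod_val a⟩
  have hsucc : 1 + (m : ZMod (p ^ k)) = ((1 + m : ℕ) : ZMod (p ^ k)) := by push_cast; rfl
  rw [hsucc, ZMod.isUnit_natCast_iff_not_dvd_pow hp hk, ZMod.isUnit_natCast_iff_not_dvd_pow hp hk,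
    ← not_and_or]
  rintro ⟨hm, hm'⟩
  exact hp.not_dvd_one ((Nat.dvd_add_left hm).1 hm')

theorem finite_steinbergGroup_of_isUnit_or {A : Type*} [CommRing A] [Finite ι] [Finite A]
    (hι : 3 ≤ ENat.card ι) (hA : ∀ a : A, IsUnit a ∨ IsUnit (1 + a)) :
    Finite (SteinbergGroup ι A) :=
  SteinbergGroup.isSteinbergFamily_root.finite_of_closure_eq_top hι hA
    SteinbergGroup.closure_rootElements_root

theorem finite_steinbergGroup_zmod [Finite ι] (hι : 3 ≤ ENat.card ι) (N : ℕ) [NeZero N] :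
    Finite (SteinbergGroup ι (ZMod N)) := by
  have hN := NeZero.ne N
  induction N using Nat.recOnPosPrimePosCoprime with
  | prime_pow p k hp hk =>
    have : NeZero (p ^ k) := ⟨hN⟩
    exact finite_steinbergGroup_of_isUnit_or hι (isUnit_or_isUnit_one_add_zmod_prime_pow hp hk)
  | zero => exact absurd rfl hN
  | one => exact finite_steinbergGroup_of_isUnit_or hι fun a => Or.inl (isUnit_of_subsingleton a)
  | coprime a b ha hb hab iha ihb =>
    have := iha (by omega)
    have := ihb (by omega)
    have := finite_steinbergGroup_prod (A := ZMod a) (B := ZMod b) hι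
    exact finite_steinbergGroup_of_surjective
      (f := ((ZMod.chineseRemainder hab).symm : ZMod a × ZMod b →ₙ+* ZMod (a * b)))
      (ZMod.chineseRemainder hab).symm.surjective

end ZModSteinbergGroups

section CommonEigenvectors

variable {K V ι G : Type*} [Field K] [IsAlgClosed K] [AddCommGroup V] [Module K V]
  [FiniteDimensional K V] [Nontrivial V] [Group G]

theorem exists_common_eigenvector (f : ι → Module.End K V) (hf : ∀ i j, Commute (f i) (f j)) :
    ∃ v ≠ 0, ∀ i, ∃ c : K, f i v = c • v := by
  let A := Algebra.adjoin K (Set.range f)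
  have : IsMulCommutative A := Algebra.isMulCommutative_adjoin K (by
    rintro _ ⟨i, rfl⟩ _ ⟨j, rfl⟩
    exact hf i j)
  have : IsArtinian A V := isArtinian_of_tower K inferInstance
  obtain ⟨W, hW⟩ := IsAtomic.exists_atom (Submodule A V)
  have : IsSimpleModule A W := isSimpleModule_iff_isAtom.2 hW
  have : FiniteDimensional K W := inferInstanceAs (FiniteDimensional K (W.restrictScalars K))
  have := IsSimpleModule.nontrivial A W
  have hrank : Module.finrank K W = 1 := IsSimpleModule.finrank_eq_one_of_isMulCommutative A W K
  obtain ⟨v, hv⟩ := exists_ne (0 : W)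
  refine ⟨v, Subtype.coe_ne_coe.2 hv, fun i => ?_⟩
  obtain ⟨c, hc⟩ := (finrank_eq_one_iff_of_nonzero' v hv).1 hrank
    ((⟨f i, Algebra.subset_adjoin ⟨i, rfl⟩⟩ : A) • v)
  exact ⟨c, (congrArg Subtype.val hc).symm⟩

theorem exists_character_eigenvector (ρ : Representation K G V)
    (hρ : ∀ g h, Commute (ρ g) (ρ h)) :
    ∃ χ : G →* Kˣ, ∃ v ≠ 0, ∀ g, ρ g v = (χ g : K) • v := by
  obtain ⟨v, hv, hvρ⟩ := exists_common_eigenvector ρ hρ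
  choose c hc using hvρ
  have hcv {a b : K} (h : a • v = b • v) : a = b := smul_left_injective K hv h
  let χ : G →* K :=
    { toFun := c
      map_one' := hcv (by rw [← hc, map_one, one_smul, Module.End.one_apply])
      map_mul' := fun g h => hcv (by
        rw [← hc, map_mul, Module.End.mul_apply, hc h, map_smul, hc g, smul_smul, mul_comm]) }
  exact ⟨χ.toHomUnits, v, hv, hc⟩

end CommonEigenvectors

section AdditiveCharacters

variable {A K : Type*} [Field K]

theorem finiteDimensional_addMonoidHom [AddGroup A] [AddGroup.FG A] :
    FiniteDimensional K (A →+ K) := by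
  obtain ⟨S, hS⟩ := AddGroup.fg_def.1 ‹AddGroup.FG A›
  let restrict : (A →+ K) →ₗ[K] (S → K) :=
    { toFun := fun φ s => φ s
      map_add' := fun _ _ => rfl
      map_smul' := fun _ _ => rfl }
  exact FiniteDimensional.of_injective restrict fun φ ψ h =>
    AddMonoidHom.eq_of_eqOn_dense hS fun s hs => congrFun h ⟨s, hs⟩

theorem exists_addMonoidHom_ne_zero [AddCommGroup A] [AddGroup.FG A] [CharZero K] {a : A}
    (ha : ¬ IsOfFinAddOrder a) : ∃ φ : A →+ K, φ a ≠ 0 := by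
  have : Module.Finite ℤ A := Module.Finite.iff_addGroup_fg.2 inferInstance
  have ha' : (Submodule.torsion ℤ A).mkQ a ≠ 0 := fun h => by
    rw [Submodule.mkQ_apply, Submodule.Quotient.mk_eq_zero, Submodule.mem_torsion_iff] at h
    obtain ⟨m, hm⟩ := h
    exact ha (isOfFinAddOrder_iff_zsmul_eq_zero.2 ⟨m, nonZeroDivisors.ne_zero m.2, hm⟩)
  obtain ⟨ψ, hψ⟩ : ∃ ψ : Module.Dual ℤ (A ⧸ Submodule.torsion ℤ A),
      ψ ((Submodule.torsion ℤ A).mkQ a) ≠ 0 := by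
    simpa using mt (Module.forall_dual_apply_eq_zero_iff ℤ _).1 ha'
  exact ⟨(Int.castAddHom K).comp (ψ.comp (Submodule.torsion ℤ A).mkQ).toAddMonoidHom,
    Int.cast_ne_zero.2 hψ⟩

end AdditiveCharacters

section AffineFixedPointProperty

variable {K J : Type*} [Group J]

/-- The group `J` fixes a point in each of its actions on the affine line over `K` in which some
element has a nontrivial linear part. -/
def AffineFixedPointProperty (K J : Type*) [DivisionRing K] [Group J] : Prop :=
  ∀ ρ : J →* (K ≃ᵃ[K] K), (∃ g, (ρ g).linear ≠ 1) → ∃ q, ∀ g, ρ g q = q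

theorem AffineFixedPointProperty.of_surjective {H : Type*} [Group H] [DivisionRing K]
    (h : AffineFixedPointProperty K H) {p : H →* J} (hp : Function.Surjective p) :
    AffineFixedPointProperty K J := fun ρ hρ =>
  (h (ρ.comp p) (hp.exists.1 hρ)).imp fun _ hq => hp.forall.2 hq

theorem affineFixedPointProperty_magnusSubgroup {α : Type*} [DecidableEq α] [Finite α]
    [DivisionRing K] (hα : 4 ≤ ENat.card α) :
    AffineFixedPointProperty K (magnusSubgroup α) := by
  rintro ρ ⟨u, hu⟩
  obtain ⟨q, hq⟩ := hasFixedPoint_of_not_le_translations hα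
    fun hle => hu (coe_mem_translations.1 (hle u.2))
  exact ⟨q, fun g => coe_mem_fixer.1 (hq g.2)⟩

variable [Field K]

/-- The action by the affine maps `z ↦ χ a * z + t a`, for a cocycle `t` twisted by the
character `χ`. -/
def affineAction (χ : J →* Kˣ) (t : J → K) (ht : ∀ a b, t (a * b) = t a + χ a * t b) :
    J →* (K ≃ᵃ[K] K) :=
  MonoidHom.mk' (fun a => (LinearEquiv.smulOfUnit (χ a)).toAffineEquiv.trans
    (AffineEquiv.constVAdd K K (t a))) fun a b => AffineEquiv.ext fun z => by
      change t (a * b) + χ (a * b) • z = t a + χ a • (t b + χ b • z)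
      rw [ht, map_mul, smul_add, mul_smul, add_assoc, Units.smul_def _ (t b), smul_eq_mul]

theorem affineAction_apply {χ : J →* Kˣ} {t : J → K} (ht : ∀ a b, t (a * b) = t a + χ a * t b)
    (a : J) (z : K) : affineAction χ t ht a z = t a + χ a * z := rfl

theorem AffineFixedPointProperty.exists_eq_mul_of_cocycle (hJ : AffineFixedPointProperty K J)
    {χ : J →* Kˣ} (hχ : χ ≠ 1) {t : J → K} (ht : ∀ a b, t (a * b) = t a + χ a * t b) :
    ∃ q, ∀ a, t a = (1 - χ a) * q := by
  obtain ⟨g, hg⟩ := DFunLike.ne_iff.1 hχ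
  have hlinear : (affineAction χ t ht g).linear ≠ 1 := fun h => hg (Units.ext (by
    have h1 : (χ g : K) * 1 = 1 := DFunLike.congr_fun h (1 : K)
    rwa [mul_one] at h1))
  obtain ⟨q, hq⟩ := hJ (affineAction χ t ht) ⟨g, hlinear⟩
  refine ⟨q, fun a => ?_⟩
  linear_combination (affineAction_apply ht a q).symm.trans (hq a)

end AffineFixedPointProperty

theorem eq_one_of_finite_abelianization {G T : Type*} [Group G] [CommGroup T] [IsMulTorsionFree T]
    [Finite (Abelianization G)] (f : G →* T) : f = 1 := by
  have hlift : Abelianization.lift f = 1 := MonoidHom.ext fun a =>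
    (isOfFinOrder_iff_eq_one _).1 (MonoidHom.isOfFinOrder _ (isOfFinOrder_of_finite a))
  exact MonoidHom.ext fun g => by
    rw [← Abelianization.lift_apply_of f g, hlift, MonoidHom.one_apply, MonoidHom.one_apply]

section MetabelianGroups

variable {K J : Type*} [Group J] [Field K]

/-- The function `a ↦ φ ⁅a, b⁆`, which is a twisted cocycle when conjugation scales `φ` by a
character. -/
def commutatorCocycle (φ : Additive (commutator J) →+ K) (b a : J) : K :=
  φ (.ofMul ⟨⁅a, b⁆, Subgroup.commutator_mem_commutator trivial trivial⟩)

variable {φ : Additive (commutator J) →+ K} {χ : J →* Kˣ}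
  (hφ : ∀ j d, φ (.ofMul (MulAut.conjNormal j d)) = χ j * φ (.ofMul d))

include hφ

theorem commutatorCocycle_mul (b a a' : J) :
    commutatorCocycle φ b (a * a') = commutatorCocycle φ b a + χ a * commutatorCocycle φ b a' := by
  rw [commutatorCocycle, commutatorCocycle, commutatorCocycle, ← hφ, add_comm, ← map_add,
    ← ofMul_mul]
  congr 2
  ext
  simp [commutatorElement_def, mul_assoc]

theorem commutatorCocycle_coe (b : J) (d : commutator J) :
    commutatorCocycle φ b d = (1 - χ b) * φ (.ofMul d) := by
  have hd : commutatorCocycle φ b d = φ (.ofMul (d * MulAut.conjNormal b d⁻¹)) := by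
    rw [commutatorCocycle]
    congr 2
    ext
    simp [commutatorElement_def, mul_assoc]
  rw [hd, ofMul_mul, map_add, hφ, ofMul_inv, map_neg]
  ring

omit hφ in
theorem eq_zero_of_commutatorCocycle_eq_zero (h : ∀ b a, commutatorCocycle φ b a = 0) : φ = 0 := by
  have hle : commutator J ≤
      (AddMonoidHom.toMultiplicativeRight φ).ker.map (commutator J).subtype :=
    Subgroup.commutator_le.2 fun a _ b _ => ⟨_, h b a, rfl⟩
  ext d
  exact (Subgroup.mem_map_iff_mem (commutator J).subtype_injective).1 (hle d.2)

theorem eq_zero_of_affineFixedPointProperty [CharZero K] [Finite (Abelianization J)]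
    (hJ : AffineFixedPointProperty K J) : φ = 0 := by
  by_cases hχ : χ = 1
  · refine eq_zero_of_commutatorCocycle_eq_zero fun b a => ?_
    let t : J →* Multiplicative K := MonoidHom.mk' (fun a => .ofAdd (commutatorCocycle φ b a))
      fun a a' => by simp [commutatorCocycle_mul hφ, hχ]
    exact Multiplicative.ofAdd.injective
      (DFunLike.congr_fun (eq_one_of_finite_abelianization t) a)
  · obtain ⟨g, hg⟩ := DFunLike.ne_iff.1 hχ
    obtain ⟨q, hq⟩ := hJ.exists_eq_mul_of_cocycle hχ (commutatorCocycle_mul hφ g)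
    have hχd (d : commutator J) : χ d = 1 := Abelianization.commutator_subset_ker χ d.2
    ext d
    have hd := (commutatorCocycle_coe hφ g d).symm.trans (hq _)
    rw [hχd, Units.val_one, sub_self, zero_mul] at hd
    exact (mul_eq_zero.1 hd).resolve_left (sub_ne_zero.2 fun h => hg (Units.ext h.symm))

omit hφ

/-- The representation of `J` by conjugation on the additive characters of its commutator
subgroup. -/
def conjRepresentation (K J : Type*) [Group J] [Field K] :
    Representation K J (Additive (commutator J) →+ K) where
  toFun j :=
    { toFun := fun φ => φ.comp (MulAut.conjNormal j⁻¹).toMonoidHom.toAdditive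
      map_add' := fun _ _ => rfl
      map_smul' := fun _ _ => rfl }
  map_one' := by
    ext φ d
    simp
  map_mul' j k := by
    ext φ d
    simp

theorem conjRepresentation_apply (j : J) (d : commutator J) :
    conjRepresentation K J j φ (.ofMul d) = φ (.ofMul (MulAut.conjNormal j⁻¹ d)) := rfl

theorem commute_conjNormal_commutator [IsMulCommutative (commutator J)] (g h : J) :
    Commute (MulAut.conjNormal g : MulAut (commutator J)) (MulAut.conjNormal h) := by
  rw [← commutatorElement_eq_one_iff_commute, ← map_commutatorElement]
  ext d
  have hd : ⁅g, h⁆ ∈ commutator J := Subgroup.commutator_mem_commutator trivial trivial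
  exact mul_inv_eq_of_eq_mul (setLike_mul_comm hd d.2)

theorem commute_conjRepresentation [IsMulCommutative (commutator J)] (g h : J) :
    Commute (conjRepresentation K J g) (conjRepresentation K J h) := by
  ext φ d
  exact congrArg (fun c => φ (.ofMul c))
    (DFunLike.congr_fun (commute_conjNormal_commutator h⁻¹ g⁻¹).eq d)

open scoped IsMulCommutative in
theorem finite_of_affineFixedPointProperty [CharZero K] [IsAlgClosed K] [Group.FG J]
    [Finite (Abelianization J)] [IsMulCommutative (commutator J)]
    (hJ : AffineFixedPointProperty K J) : Finite J := by
  have : Finite (J ⧸ commutator J) := ‹Finite (Abelianization J)›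
  have : (commutator J).FiniteIndex := Subgroup.finiteIndex_of_finite_quotient
  have : Group.FG (commutator J) := Subgroup.fg_of_index_ne_zero _
  have htorsion (d : commutator J) : IsOfFinOrder d := by
    by_contra hd
    obtain ⟨φ₀, hφ₀⟩ := exists_addMonoidHom_ne_zero (K := K) (a := Additive.ofMul d)
      (mt isOfFinAddOrder_ofMul_iff.1 hd)
    have : Nontrivial (Additive (commutator J) →+ K) := ⟨φ₀, 0, DFunLike.ne_iff.2 ⟨_, hφ₀⟩⟩
    have := finiteDimensional_addMonoidHom (A := Additive (commutator J)) (K := K)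
    obtain ⟨χ, φ, hφ, hχ⟩ := exists_character_eigenvector (conjRepresentation K J)
      commute_conjRepresentation
    refine hφ (eq_zero_of_affineFixedPointProperty (χ := χ⁻¹) (fun j d => ?_) hJ)
    simpa [conjRepresentation_apply] using DFunLike.congr_fun (hχ j⁻¹) (.ofMul d)
  have : Finite (commutator J) := CommGroup.finite_of_fg_isMulTorsion _ htorsion
  exact Finite.of_subgroup_quotient (commutator J)

end MetabelianGroups

section CommutingPowers

open scoped IsMulCommutative

variable {G H : Type*} [Group G] [Group H] {g h : G} {N : ℕ}

theorem commutatorElement_pow_right (hh : Commute h ⁅g, h⁆) (n : ℕ) : ⁅g, h ^ n⁆ = ⁅g, h⁆ ^ n := by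
  have hconj : g * h * g⁻¹ = ⁅g, h⁆ * h := by simp [commutatorElement_def]
  rw [commutatorElement_def, ← conj_pow, hconj, hh.symm.mul_pow, mul_inv_cancel_right]

theorem commutatorElement_pow_left (hg : Commute g ⁅g, h⁆) (n : ℕ) : ⁅g ^ n, h⁆ = ⁅g, h⁆ ^ n := by
  rw [← commutatorElement_inv, commutatorElement_pow_right, ← inv_pow, commutatorElement_inv]
  rw [← commutatorElement_inv]
  exact hg.inv_right

theorem commutatorElement_pow_pow (hg : Commute g ⁅g, h⁆) (hh : Commute h ⁅g, h⁆) (a b : ℕ) :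
    ⁅g ^ a, h ^ b⁆ = ⁅g, h⁆ ^ (a * b) := by
  rw [mul_comm, pow_mul, ← commutatorElement_pow_right hh]
  refine commutatorElement_pow_left ?_ a
  rw [commutatorElement_pow_right hh]
  exact hg.pow_right b

theorem commutatorElement_pow_eq_one (hg : Commute g ⁅g, h⁆) (hh : Commute h ⁅g, h⁆)
    (hN : Commute (g ^ N) (h ^ N)) : ⁅g, h⁆ ^ (N * N) = 1 := by
  rw [← commutatorElement_pow_pow hg hh, commutatorElement_eq_one_iff_commute.2 hN]

theorem commute_pow_of_surjective {f : G →* H} (hf : Function.Surjective f)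
    (hN : ∀ g h : G, Commute (g ^ N) (h ^ N)) (g h : H) : Commute (g ^ N) (h ^ N) := by
  obtain ⟨g, rfl⟩ := hf g
  obtain ⟨h, rfl⟩ := hf h
  simpa using (hN g h).map f

theorem commutator_eq_subgroupOf (K : Subgroup G) : commutator K = ⁅K, K⁆.subgroupOf K := by
  rw [← K.map_subtype_commutator, Subgroup.subgroupOf,
    Subgroup.comap_map_eq_self_of_injective K.subtype_injective]

theorem finite_abelianization_iff_relIndex_ne_zero (K : Subgroup G) :
    Finite (Abelianization K) ↔ ⁅K, K⁆.relIndex K ≠ 0 := by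
  rw [Subgroup.relIndex, ← commutator_eq_subgroupOf]
  exact Subgroup.index_ne_zero_iff_finite.symm

instance isMulCommutative_map_mk_commutator (K : Subgroup G) [K.Normal] :
    IsMulCommutative (K.map (QuotientGroup.mk' ⁅K, K⁆)) :=
  Subgroup.commutator_self_eq_bot_iff.1 <|
    (Subgroup.map_commutator K K _).symm.trans (QuotientGroup.map_mk'_self _)

theorem commute_pow_index (K : Subgroup G) [K.Normal] (g h : G ⧸ ⁅K, K⁆) :
    Commute (g ^ K.index) (h ^ K.index) := by
  have hπ := QuotientGroup.mk'_surjective ⁅K, K⁆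
  obtain ⟨g, rfl⟩ := hπ g
  obtain ⟨h, rfl⟩ := hπ h
  rw [← map_pow, ← map_pow]
  exact setLike_mul_comm (Subgroup.mem_map_of_mem _ (K.pow_index_mem g))
    (Subgroup.mem_map_of_mem _ (K.pow_index_mem h))

end CommutingPowers

section ImageOfMagnusSubgroup

open scoped IsMulCommutative

variable {α : Type*} [DecidableEq α] {E : Type*} [Group E] {π : MulAut (FreeGroup α) →* E} {N : ℕ}
  {i j k : α}

instance group_fg_magnusSubgroup [Finite α] : Group.FG (magnusSubgroup α) := by
  have hfin : {u : MulAut (FreeGroup α) | IsMagnusGenerator u}.Finite := by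
    refine ((Set.finite_range fun p : α × α => partialConj p.1 p.2).union
      (Set.finite_range fun p : α × α × α => commTransvection p.1 p.2.1 p.2.2)).subset ?_
    rintro u (@⟨i, j⟩ | @⟨i, j, k⟩)
    · exact Or.inl ⟨(i, j), rfl⟩
    · exact Or.inr ⟨(i, j, k), rfl⟩
  have := hfin.to_subtype
  exact Group.closure_finite_fg _

theorem map_partialConj_pow_eq_one [IsMulCommutative ((magnusSubgroup α).map π)]
    (hN : ∀ g h : E, Commute (g ^ N) (h ^ N)) (hki : k ≠ i) (hkj : k ≠ j) (hij : i ≠ j) :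
    π (partialConj i j) ^ (N * N) = 1 := by
  have hcomm : Commute (π (partialConj i k)) (π (partialConj i j)) :=
    setLike_mul_comm (Subgroup.mem_map_of_mem π (partialConj_mem i k))
      (Subgroup.mem_map_of_mem π (partialConj_mem i j))
  have hconj : π (partialConj i j) = ⁅π (transvection k j), π (partialConj i k)⁆ := by
    have := (transvection_partialConj_ia hkj hki.symm hij).map π
    rw [map_mul, hcomm.eq] at this
    rw [commutatorElement_def, this.eq]
    group
  rw [hconj]
  refine commutatorElement_pow_eq_one ?_ ?_ (hN _ _) <;> rw [← hconj]
  · exact (transvection_partialConj_ij hkj hki.symm hij hkj.symm hij).map π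
  · exact hcomm

theorem finite_map_magnusSubgroup [Finite α] [IsMulCommutative ((magnusSubgroup α).map π)]
    [NeZero N] (hα : 3 ≤ ENat.card α) (hN : ∀ g h : E, Commute (g ^ N) (h ^ N)) :
    Finite ((magnusSubgroup α).map π) := by
  have hcomm {u v} (hu : u ∈ magnusSubgroup α) (hv : v ∈ magnusSubgroup α) :
      Commute (π u) (π v) :=
    setLike_mul_comm (Subgroup.mem_map_of_mem π hu) (Subgroup.mem_map_of_mem π hv)
  have hpartialConj {i j : α} (hij : i ≠ j) : π (partialConj i j) ^ (N * N) = 1 := by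
    obtain ⟨k, hki, hkj⟩ := ENat.exists_ne_ne_of_three_le hα i j
    exact map_partialConj_pow_eq_one hN hki hkj hij
  have hpow {u} (hu : u ∈ magnusSubgroup α) : π u ^ (N * N) = 1 := by
    induction hu using Subgroup.closure_induction with
    | mem u hu =>
      cases hu with
      | partialConj hij => exact hpartialConj hij
      | @commTransvection i j k hij hik hjk =>
        have hconj : transvection i j * partialConj i k * (transvection i j)⁻¹ ∈ magnusSubgroup α :=
          magnusSubgroup_normal.conj_mem _ (partialConj_mem i k) _
        rw [commTransvection_eq_commutator hij hik.symm, commutatorElement_def, map_mul,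
          (hcomm hconj (inv_mem (partialConj_mem i k))).mul_pow]
        simp [conj_pow, hpartialConj hik]
    | one => simp
    | mul u v hu hv ihu ihv => rw [map_mul, (hcomm hu hv).mul_pow, ihu, ihv, mul_one]
    | inv u _ ih => rw [map_inv, inv_pow, ih, inv_one]
  have := Group.fg_of_surjective (π.subgroupMap_surjective (magnusSubgroup α))
  refine CommGroup.finite_of_fg_isMulTorsion _ ?_
  rintro ⟨_, u, hu, rfl⟩
  refine isOfFinOrder_iff_pow_eq_one.2 ⟨N * N, Nat.pos_of_neZero _, ?_⟩
  exact Subtype.ext (hpow hu)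

theorem finite_map_magnusSubgroup_of_surjective [Finite α] [NeZero N]
    [IsMulCommutative (⁅(magnusSubgroup α).map π, (magnusSubgroup α).map π⁆ : Subgroup E)]
    (hα : 4 ≤ ENat.card α) (hπ : Function.Surjective π)
    (hN : ∀ g h : E, Commute (g ^ N) (h ^ N)) : Finite ((magnusSubgroup α).map π) := by
  set J := (magnusSubgroup α).map π
  have : J.Normal := magnusSubgroup_normal.map π hπ
  have : Finite (Abelianization J) := by
    let q := QuotientGroup.mk' ⁅J, J⁆
    have hJq : (magnusSubgroup α).map (q.comp π) = J.map q := (Subgroup.map_map _ q π).symm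
    have : IsMulCommutative ((magnusSubgroup α).map (q.comp π)) := by
      rw [hJq]
      infer_instance
    have : Finite (J.map q) := by
      rw [← hJq]
      refine finite_map_magnusSubgroup (le_trans (by norm_num) hα)
        (commute_pow_of_surjective (QuotientGroup.mk'_surjective _) hN)
    rw [finite_abelianization_iff_relIndex_ne_zero, ← QuotientGroup.ker_mk' ⁅J, J⁆,
      Subgroup.relIndex_ker]
    exact Nat.card_pos.ne'
  have : Group.FG J := Group.fg_of_surjective (π.subgroupMap_surjective (magnusSubgroup α))
  have : IsMulCommutative (commutator J) := by
    rw [commutator_eq_subgroupOf]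
    infer_instance
  exact finite_of_affineFixedPointProperty <|
    (affineFixedPointProperty_magnusSubgroup (K := ℂ) hα).of_surjective
      (π.subgroupMap_surjective (magnusSubgroup α))

end ImageOfMagnusSubgroup

section QuotientByMagnusSubgroup

open scoped Pointwise

variable {α : Type*} [DecidableEq α] {a b i j k l : α}

theorem transvection_transvection_ij_jk (hij : i ≠ j) (hik : i ≠ k) (hjk : j ≠ k) :
    SemiconjBy (transvection j k) (transvection i j) (transvection i j * transvection i k) := by
  refine ext_of fun l => ?_
  rcases eq_or_ne l i with rfl | hli <;> rcases eq_or_ne l j with rfl | hlj <;>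
    first | contradiction | simp [mul_assoc, hij.symm, hik.symm, *]

theorem commute_transvection (hij : i ≠ j) (hkl : k ≠ l) (hik : i ≠ k) (hil : i ≠ l)
    (hkj : k ≠ j) : Commute (transvection i j) (transvection k l) := by
  refine ext_of fun m => ?_
  rcases eq_or_ne m i with rfl | hmi <;> rcases eq_or_ne m k with rfl | hmk <;>
    first | contradiction | simp [hil.symm, hkj.symm, *]

theorem inversion_transvection_ij (hij : i ≠ j) (hai : a ≠ i) (haj : a ≠ j) :
    Commute (inversion a) (transvection i j) := by
  refine ext_of fun l => ?_
  rcases eq_or_ne l i with rfl | hli <;> rcases eq_or_ne l a with rfl | hla <;>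
    first | contradiction | simp [hai.symm, haj.symm, *]

@[simp]
theorem transvection_self (i : α) : transvection i i = 1 := by simp [transvection]

variable {K : Type*} [Group K] {ρ : MulAut (FreeGroup α) →* K} {N : ℕ}

theorem commute_map_transvection (hρ : magnusSubgroup α ≤ ρ.ker) (hil : i ≠ l) (hkj : k ≠ j) :
    Commute (ρ (transvection i j)) (ρ (transvection k l)) := by
  rcases eq_or_ne i j with rfl | hij
  · simp
  rcases eq_or_ne k l with rfl | hkl
  · simp
  rcases eq_or_ne i k with rfl | hik
  · rw [← commutatorElement_eq_one_iff_commute, ← map_commutatorElement]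
    exact hρ (commTransvection_mem i j l)
  · exact (commute_transvection hij hkl hik hil hkj).map ρ

theorem commutatorElement_map_transvection (hρ : magnusSubgroup α ≤ ρ.ker) (hij : i ≠ j)
    (hik : i ≠ k) (hjk : j ≠ k) :
    ⁅ρ (transvection j k), ρ (transvection i j)⁆ = ρ (transvection i k) := by
  have hconj := (transvection_transvection_ij_jk hij hik hjk).map ρ
  rw [map_mul, (commute_map_transvection hρ hik hij).eq] at hconj
  rw [commutatorElement_def, hconj.eq]
  group

theorem commutatorElement_map_transvection_pow_pow (hρ : magnusSubgroup α ≤ ρ.ker) (hij : i ≠ j)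
    (hik : i ≠ k) (hjk : j ≠ k) (a b : ℕ) :
    ⁅ρ (transvection j k) ^ a, ρ (transvection i j) ^ b⁆ = ρ (transvection i k) ^ (a * b) := by
  have hcomm := commutatorElement_map_transvection hρ hij hik hjk
  rw [commutatorElement_pow_pow, hcomm] <;> rw [hcomm]
  · exact commute_map_transvection hρ hjk hik
  · exact commute_map_transvection hρ hik hij

theorem map_transvection_pow_eq_one (hρ : magnusSubgroup α ≤ ρ.ker) (hα : 3 ≤ ENat.card α)
    (hN : ∀ g h : K, Commute (g ^ N) (h ^ N)) (i k : α) :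
    ρ (transvection i k) ^ (N * N) = 1 := by
  rcases eq_or_ne i k with rfl | hik
  · simp
  obtain ⟨j, hji, hjk⟩ := ENat.exists_ne_ne_of_three_le hα i k
  rw [← commutatorElement_map_transvection_pow_pow hρ hji.symm hik hjk,
    commutatorElement_eq_one_iff_commute.2 (hN _ _)]

/-- The images in a quotient by the Magnus subgroup of the right transvections `x_j ↦ x_j x_i^a`,
with the exponent `a` taken modulo `N`. -/
def transvectionRoot (ρ : MulAut (FreeGroup α) →* K) (N : ℕ) (i j : α) (a : ZMod N) : K :=
  ρ (transvection j i) ^ a.val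

theorem isSteinbergFamily_transvectionRoot [NeZero N] (hρ : magnusSubgroup α ≤ ρ.ker)
    (hN : ∀ i j, ρ (transvection i j) ^ N = 1) : IsSteinbergFamily (transvectionRoot ρ N) where
  diag i a := by simp [transvectionRoot]
  map_add i j a b := by
    rw [transvectionRoot, ZMod.val_add, ← pow_eq_pow_mod _ (hN j i), pow_add]
    rfl
  commutator_eq hij hjk hik a b := by
    rw [transvectionRoot, transvectionRoot,
      commutatorElement_map_transvection_pow_pow hρ hjk.symm hik.symm hij.symm, transvectionRoot,
      ZMod.val_mul, ← pow_eq_pow_mod _ (hN _ _)]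
  commute hjk hil a b := (commute_map_transvection hρ hjk hil.symm).pow_pow _ _

/-- The subgroup generated by all right transvections. -/
def transvectionSubgroup (α : Type*) [DecidableEq α] : Subgroup (MulAut (FreeGroup α)) :=
  Subgroup.closure (Set.range fun p : α × α => transvection p.1 p.2)

theorem transvection_mem_transvectionSubgroup (i j : α) :
    transvection i j ∈ transvectionSubgroup α :=
  Subgroup.subset_closure ⟨(i, j), rfl⟩

theorem finite_map_transvectionSubgroup [Finite α] [NeZero N] (hρ : magnusSubgroup α ≤ ρ.ker)
    (hα : 3 ≤ ENat.card α) (hN : ∀ g h : K, Commute (g ^ N) (h ^ N)) :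
    Finite ((transvectionSubgroup α).map ρ) := by
  have hpow := map_transvection_pow_eq_one hρ hα hN
  have := finite_steinbergGroup_zmod hα (N * N)
  have := (isSteinbergFamily_transvectionRoot hρ hpow).finite_closure
  have hle : (transvectionSubgroup α).map ρ ≤
      Subgroup.closure (rootElements (transvectionRoot ρ (N * N))) := by
    rw [transvectionSubgroup, MonoidHom.map_closure, Subgroup.closure_le]
    rintro _ ⟨_, ⟨⟨i, j⟩, rfl⟩, rfl⟩
    refine Subgroup.subset_closure ⟨j, i, (1 : ℕ), ?_⟩
    rw [transvectionRoot, ZMod.val_natCast, ← pow_eq_pow_mod _ (hpow i j), pow_one]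
  exact Finite.of_injective _ (Subgroup.inclusion_injective hle)

theorem inversion_conj_transvection_mem (a i j : α) :
    inversion a * transvection i j * (inversion a)⁻¹ ∈
      magnusSubgroup α ⊔ transvectionSubgroup α := by
  have hmem (k l : α) : transvection k l ∈ magnusSubgroup α ⊔ transvectionSubgroup α :=
    Subgroup.mem_sup_right (transvection_mem_transvectionSubgroup k l)
  rcases eq_or_ne i j with rfl | hij
  · simp
  rcases eq_or_ne a i with rfl | hai
  · have hinv : inversion a * transvection a j * (inversion a)⁻¹ =
        partialConj a j * (transvection a j)⁻¹ := by
      have hι : (inversion a)⁻¹ = inversion a := rfl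
      simp [partialConj, leftTransvection, hι, mul_assoc]
    rw [hinv]
    exact mul_mem (Subgroup.mem_sup_left (partialConj_mem a j)) (inv_mem (hmem a j))
  rcases eq_or_ne a j with rfl | haj
  · have hinv := transvection_inv_eq hij
    exact hinv ▸ inv_mem (hmem i a)
  · exact conj_mem_of_semiconjBy (inversion_transvection_ij hij hai haj) (hmem i j)

theorem conj_mem_sup_of_isNielsenGenerator {g u : MulAut (FreeGroup α)} (hg : IsNielsenGenerator g)
    (hu : u ∈ transvectionSubgroup α) :
    g * u * g⁻¹ ∈ magnusSubgroup α ⊔ transvectionSubgroup α := by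
  have hmem (k l : α) : transvection k l ∈ magnusSubgroup α ⊔ transvectionSubgroup α :=
    Subgroup.mem_sup_right (transvection_mem_transvectionSubgroup k l)
  refine conj_mem_of_mem_closure ?_ hu
  rintro _ ⟨⟨i, j⟩, rfl⟩
  cases hg with
  | permutation s =>
    rcases eq_or_ne i j with rfl | hij
    · simp
    · exact conj_mem_of_semiconjBy (permutation_transvection s hij) (hmem _ _)
  | inversion a => exact inversion_conj_transvection_mem a i j
  | transvection => exact mul_mem (mul_mem (hmem _ _) (hmem _ _)) (inv_mem (hmem _ _))

variable (α) in
/-- The group of signed permutations of the generators, as the stabilizer of the set of the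
generators and their inverses. -/
def signedPermutations : Subgroup (MulAut (FreeGroup α)) :=
  MulAction.stabilizer _ (Set.range of ∪ (Set.range of)⁻¹ : Set (FreeGroup α))

omit [DecidableEq α] in
theorem finite_signedPermutations [Finite α] :
    (signedPermutations α : Set (MulAut (FreeGroup α))).Finite := by
  let B : Set (FreeGroup α) := Set.range of ∪ (Set.range of)⁻¹
  have : Finite B := ((Set.finite_range of).union (Set.finite_range of).inv).to_subtype
  have hmaps (e : signedPermutations α) (i : α) : (e : MulAut (FreeGroup α)) (of i) ∈ B :=
    (MulAction.mem_stabilizer_set.1 e.2 (of i)).2 (Or.inl ⟨i, rfl⟩)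
  refine Set.finite_coe_iff.1 (Finite.of_injective (fun e i => (⟨_, hmaps e i⟩ : B)) ?_)
  intro e f hef
  exact Subtype.ext (ext_of fun i => congrArg Subtype.val (congrFun hef i))

theorem signedPermutations_sup_transvectionSubgroup [Finite α] :
    signedPermutations α ⊔ transvectionSubgroup α = ⊤ := by
  have hsigned {g : MulAut (FreeGroup α)}
      (h : ∀ i, g (of i) ∈ (Set.range of ∪ (Set.range of)⁻¹ : Set (FreeGroup α))) :
      g ∈ signedPermutations α := by
    refine (MulAction.mem_stabilizer_set_iff_smul_set_subset
      ((Set.finite_range of).union (Set.finite_range of).inv)).2 ?_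
    rintro _ ⟨w, ⟨i, rfl⟩ | ⟨i, hi⟩, rfl⟩
    · exact h i
    · obtain rfl := inv_eq_iff_eq_inv.1 hi.symm
      simpa [or_comm] using h i
  rw [eq_top_iff, ← nielsenSubgroup_eq_top, nielsenSubgroup, Subgroup.closure_le]
  rintro g (⟨s⟩ | ⟨a⟩ | @⟨i, j⟩)
  · exact Subgroup.mem_sup_left (hsigned fun i => by simp)
  · refine Subgroup.mem_sup_left (hsigned fun i => ?_)
    rcases eq_or_ne i a with rfl | hia <;> simp [*]
  · exact Subgroup.mem_sup_right (transvection_mem_transvectionSubgroup i j)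

theorem normal_map_transvectionSubgroup [Finite α] (hsurj : Function.Surjective ρ)
    (hρ : magnusSubgroup α ≤ ρ.ker) [Finite ((transvectionSubgroup α).map ρ)] :
    ((transvectionSubgroup α).map ρ).Normal := by
  have hsup : (magnusSubgroup α ⊔ transvectionSubgroup α).map ρ =
      (transvectionSubgroup α).map ρ := by
    rw [Subgroup.map_sup, (Subgroup.map_eq_bot_iff _).2 hρ, bot_sup_eq]
  have : Finite ((transvectionSubgroup α).map ρ : Set K) := ‹_›
  rw [← Subgroup.normalizer_eq_top_iff, eq_top_iff, ← Subgroup.map_top_of_surjective ρ hsurj,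
    ← nielsenSubgroup_eq_top, nielsenSubgroup, MonoidHom.map_closure, Subgroup.closure_le]
  rintro _ ⟨g, hg, rfl⟩
  refine Subgroup.mem_normalizer_fintype ?_
  rintro _ ⟨u, hu, rfl⟩
  rw [← map_mul, ← map_inv, ← map_mul, SetLike.mem_coe, ← hsup]
  exact Subgroup.mem_map_of_mem ρ (conj_mem_sup_of_isNielsenGenerator hg hu)

theorem finite_of_magnusSubgroup_le_ker [Finite α] [NeZero N] (hα : 3 ≤ ENat.card α)
    (hsurj : Function.Surjective ρ) (hρ : magnusSubgroup α ≤ ρ.ker)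
    (hN : ∀ g h : K, Commute (g ^ N) (h ^ N)) : Finite K := by
  have := finite_map_transvectionSubgroup hρ hα hN
  have := normal_map_transvectionSubgroup hsurj hρ
  have huniv : ((signedPermutations α).map ρ : Set K) * ((transvectionSubgroup α).map ρ : Set K) =
      Set.univ := by
    rw [← Subgroup.mul_normal, ← Subgroup.map_sup, signedPermutations_sup_transvectionSubgroup,
      Subgroup.map_top_of_surjective ρ hsurj, Subgroup.coe_top]
  rw [← Set.finite_univ_iff, ← huniv]
  exact (finite_signedPermutations.image ρ).mul
    (Set.finite_coe_iff.1 ‹Finite ((transvectionSubgroup α).map ρ)›)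

end QuotientByMagnusSubgroup

section FiniteAbelianization

variable {α : Type*} [Finite α] [DecidableEq α]

theorem finiteIndex_commutator_of_commutator_magnusSubgroup_le (hα : 4 ≤ ENat.card α)
    (H : Subgroup (MulAut (FreeGroup α))) [H.Normal] [H.FiniteIndex]
    (hH : ⁅magnusSubgroup α, magnusSubgroup α⁆ ≤ H) :
    (⁅H, H⁆ : Subgroup (MulAut (FreeGroup α))).FiniteIndex := by
  have hα' : 3 ≤ ENat.card α := le_trans (by norm_num) hα
  let π := QuotientGroup.mk' ⁅H, H⁆
  have hπ : Function.Surjective π := QuotientGroup.mk'_surjective _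
  have hN := commute_pow_index H
  have : NeZero H.index := ⟨Subgroup.FiniteIndex.index_ne_zero⟩
  have : Finite ((magnusSubgroup α).map π) := by
    have : IsMulCommutative (H.map π) := isMulCommutative_map_mk_commutator H
    have : IsMulCommutative (⁅(magnusSubgroup α).map π, (magnusSubgroup α).map π⁆ :
        Subgroup (MulAut (FreeGroup α) ⧸ ⁅H, H⁆)) := by
      rw [← Subgroup.map_commutator]
      exact ⟨⟨fun a b => Subtype.ext <|
        setLike_mul_comm (Subgroup.map_mono hH a.2) (Subgroup.map_mono hH b.2)⟩⟩
    exact finite_map_magnusSubgroup_of_surjective hα hπ hN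
  have : ((magnusSubgroup α).map π).Normal := magnusSubgroup_normal.map π hπ
  have : Finite ((MulAut (FreeGroup α) ⧸ ⁅H, H⁆) ⧸ (magnusSubgroup α).map π) := by
    have hq := QuotientGroup.mk'_surjective ((magnusSubgroup α).map π)
    refine finite_of_magnusSubgroup_le_ker (ρ := (QuotientGroup.mk' _).comp π) hα' (hq.comp hπ) ?_
      (commute_pow_of_surjective hq hN)
    rw [← MonoidHom.comap_ker, QuotientGroup.ker_mk', ← Subgroup.map_le_iff_le_comap]
  have := Finite.of_subgroup_quotient ((magnusSubgroup α).map π)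
  exact Subgroup.finiteIndex_of_finite_quotient

theorem finite_abelianization_of_commutator_magnusSubgroup_le (hα : 4 ≤ ENat.card α)
    (Γ : Subgroup (MulAut (FreeGroup α))) [Γ.FiniteIndex]
    (hΓ : ⁅magnusSubgroup α, magnusSubgroup α⁆ ≤ Γ) : Finite (Abelianization Γ) := by
  have := finiteIndex_commutator_of_commutator_magnusSubgroup_le hα Γ.normalCore
    (Subgroup.normal_le_normalCore.2 hΓ)
  have : (⁅Γ, Γ⁆ : Subgroup (MulAut (FreeGroup α))).FiniteIndex :=
    Subgroup.finiteIndex_of_le (Subgroup.commutator_mono Γ.normalCore_le Γ.normalCore_le)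
  exact (finite_abelianization_iff_relIndex_ne_zero Γ).2
    (Subgroup.FiniteIndex.index_ne_zero (H := ⁅Γ, Γ⁆.subgroupOf Γ))

end FiniteAbelianization

end FreeGroupAut

/-- Ershov–He.  For `n ≥ 4`, if `Γ` is a finite index subgroup of
`Aut(Fₙ)` containing `[IAₙ, IAₙ]`, then `Γ` has finite abelianization; in particular
every group homomorphism `Γ → (ℝ, +)` is trivial. -/
theorem ershov_he_contains_commutator_of_IA
    (n : ℕ) (hn : 4 ≤ n)
    (Γ : Subgroup (AutF n)) [Γ.FiniteIndex]
    (h : ⁅IA n, IA n⁆ ≤ Γ) :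
    Finite (Abelianization Γ) ∧ ∀ φ : Γ →* Multiplicative ℝ, φ = 1 := by
  have hM := Subgroup.commutator_mono (FreeGroupAut.magnusSubgroup_le_IA n)
    (FreeGroupAut.magnusSubgroup_le_IA n)
  have hfinite : Finite (Abelianization Γ) :=
    FreeGroupAut.finite_abelianization_of_commutator_magnusSubgroup_le (by simpa using hn) Γ
      (hM.trans h)
  exact ⟨hfinite, FreeGroupAut.eq_one_of_finite_abelianization⟩
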